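/- Let N ≥ 2, 1 < p ≤ N and p − 1 < q < q_c, and let Ω ⊆ ℝ^N be an open set containing 0. Let u be a strong solution of (E) on Ω ∖ {0} with u ≥ 0 on Ω ∖ {0}. Then exactly one of the following alternatives holds: (i) there exists k ≥ 0 such that lim_{x→0} u(x)/μ_p(x) = k; or (ii) lim_{x→0} |x|^{β_q} u(x) = λ_{N,p,q}. -/

import Mathlib

open Metric Set Filter Topology MeasureTheory

/-- The vector field `x ↦ |∇u(x)|^{p-2} ∇u(x)`. -/
noncomputable def pGradField {N : ℕ} (p : ℝ) (u : EuclideanSpace ℝ (Fin N) → ℝ)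
    (x : EuclideanSpace ℝ (Fin N)) : EuclideanSpace ℝ (Fin N) :=
  ‖gradient u x‖ ^ (p - 2) • gradient u x

/-- A strong solution of `(E) : -Δ_p u + |∇u|^q = 0` on an open set `G ⊆ ℝ^N`. -/
def IsStrongSolution {N : ℕ} (p q : ℝ) (G : Set (EuclideanSpace ℝ (Fin N)))
    (u : EuclideanSpace ℝ (Fin N) → ℝ) : Prop :=
  ContDiffOn ℝ 1 u G ∧
  ContDiffOn ℝ 3 u {x | x ∈ G ∧ gradient u x ≠ 0} ∧
  ∀ x ∈ G, DifferentiableAt ℝ (pGradField p u) x ∧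
    LinearMap.trace ℝ (EuclideanSpace ℝ (Fin N))
      (fderiv ℝ (pGradField p u) x : EuclideanSpace ℝ (Fin N) →ₗ[ℝ] EuclideanSpace ℝ (Fin N))
      = ‖gradient u x‖ ^ q

/-- The fundamental solution of the p-Laplacian in `ℝ^N`. -/
noncomputable def mup (N : ℕ) (p : ℝ) (x : EuclideanSpace ℝ (Fin N)) : ℝ :=
  if p < N then ((p - 1) / ((N : ℝ) - p)) * ‖x‖ ^ ((p - (N : ℝ)) / (p - 1))
  else -Real.log ‖x‖

section IsolatedSingularities
variable {N : ℕ}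

/-- `φ` is differentiable near `0`, with first derivative `a` and second derivative `b` at `0`. -/
def HasSecondDeriv (φ : ℝ → ℝ) (a b : ℝ) : Prop :=
  ∃ ψ : ℝ → ℝ, (∀ᶠ s in 𝓝 0, HasDerivAt φ (ψ s) s) ∧ ψ 0 = a ∧ HasDerivAt ψ b 0

lemma HasSecondDeriv.add {φ₁ φ₂ : ℝ → ℝ} {a₁ b₁ a₂ b₂ : ℝ} (h₁ : HasSecondDeriv φ₁ a₁ b₁)
    (h₂ : HasSecondDeriv φ₂ a₂ b₂) :
    HasSecondDeriv (fun s => φ₁ s + φ₂ s) (a₁ + a₂) (b₁ + b₂) := by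
  obtain ⟨ψ₁, h11, h12, h13⟩ := h₁
  obtain ⟨ψ₂, h21, h22, h23⟩ := h₂
  refine ⟨fun s => ψ₁ s + ψ₂ s, ?_, by simp [h12, h22], h13.add h23⟩
  filter_upwards [h11, h21] with s hs1 hs2 using hs1.add hs2

lemma HasSecondDeriv.const_mul {φ : ℝ → ℝ} {a b : ℝ} (c : ℝ) (h : HasSecondDeriv φ a b) :
    HasSecondDeriv (fun s => c * φ s) (c * a) (c * b) := by
  obtain ⟨ψ, h1, h2, h3⟩ := h
  refine ⟨fun s => c * ψ s, ?_, by simp [h2], h3.const_mul c⟩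
  filter_upwards [h1] with s hs using hs.const_mul c

lemma HasSecondDeriv.neg {φ : ℝ → ℝ} {a b : ℝ} (h : HasSecondDeriv φ a b) :
    HasSecondDeriv (fun s => -φ s) (-a) (-b) := by
  simpa using h.const_mul (-1)

lemma HasSecondDeriv.sub {φ₁ φ₂ : ℝ → ℝ} {a₁ b₁ a₂ b₂ : ℝ} (h₁ : HasSecondDeriv φ₁ a₁ b₁)
    (h₂ : HasSecondDeriv φ₂ a₂ b₂) :
    HasSecondDeriv (fun s => φ₁ s - φ₂ s) (a₁ - a₂) (b₁ - b₂) := by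
  simpa [sub_eq_add_neg] using h₁.add h₂.neg

lemma HasSecondDeriv.hasDerivAt {φ : ℝ → ℝ} {a b : ℝ} (h : HasSecondDeriv φ a b) :
    HasDerivAt φ a 0 := by
  obtain ⟨ψ, h1, h2, h3⟩ := h
  exact h2 ▸ h1.self_of_nhds

lemma HasSecondDeriv.eq_zero_of_isLocalMax {φ : ℝ → ℝ} {a b : ℝ} (h : HasSecondDeriv φ a b)
    (hm : IsLocalMax φ 0) : a = 0 :=
  hm.hasDerivAt_eq_zero h.hasDerivAt

lemma HasSecondDeriv.nonpos_of_isLocalMax {φ : ℝ → ℝ} {a b : ℝ} (h : HasSecondDeriv φ a b)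
    (hm : IsLocalMax φ 0) : b ≤ 0 := by
  by_contra! hb
  have ha := h.eq_zero_of_isLocalMax hm
  have hc := h.hasDerivAt.continuousAt
  have hd := h.hasDerivAt.deriv
  obtain ⟨ψ, h1, h2, h3⟩ := h
  have hψ : deriv φ =ᶠ[𝓝 0] ψ := by
    filter_upwards [h1] with s hs using hs.deriv
  have hdd : deriv (deriv φ) 0 = b := by rw [hψ.deriv_eq, h3.deriv]
  have hmin := isLocalMin_of_deriv_deriv_pos (f := φ) (x₀ := 0) (by rw [hdd]; exact hb)
    (by rw [hd, ha]) hc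
  have hconst : φ =ᶠ[𝓝 0] fun _ => φ 0 := by
    filter_upwards [hm, hmin] with s hs1 hs2 using le_antisymm hs1 hs2
  have h0 : deriv φ =ᶠ[𝓝 0] fun _ => 0 := by
    filter_upwards [hconst.deriv] with s hs
    rw [hs]; simp
  have : deriv (deriv φ) 0 = 0 := by rw [h0.deriv_eq]; simp
  linarith

/-- Euclidean space of dimension `N`. -/
abbrev Euc (N : ℕ) := EuclideanSpace ℝ (Fin N)


/-- `w` has first and second derivatives at `x` along all lines, given by `g` and `H`. -/
def HasLineJet (w : Euc N → ℝ) (x g : Euc N) (H : Euc N →L[ℝ] Euc N) : Prop :=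
  ∀ ξ : Euc N, HasSecondDeriv (fun s : ℝ => w (x + s • ξ)) (inner ℝ g ξ) (inner ℝ (H ξ) ξ)

/-- The normalized `p`-Laplacian with gradient `g` and Hessian `H`. -/
noncomputable def pTrace (p : ℝ) (g : Euc N) (H : Euc N →L[ℝ] Euc N) : ℝ :=
  LinearMap.trace ℝ (Euc N) (H : Euc N →ₗ[ℝ] Euc N) + (p - 2) * (inner ℝ (H g) g / ‖g‖ ^ 2)

/-- `w` solves `|∇w|^{2-p} Δ_p w = σ |∇w|^γ` at `x`, as a condition on the jet of `w`. -/
def SolAt (p γ σ : ℝ) (w : Euc N → ℝ) (x : Euc N) : Prop :=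
  DifferentiableAt ℝ w x ∧ (gradient w x ≠ 0 → ∃ H : Euc N →L[ℝ] Euc N,
    HasLineJet w x (gradient w x) H ∧ pTrace p (gradient w x) H = σ * ‖gradient w x‖ ^ γ)

lemma HasLineJet.add {w₁ w₂ : Euc N → ℝ} {x g₁ g₂ : Euc N} {H₁ H₂ : Euc N →L[ℝ] Euc N}
    (h₁ : HasLineJet w₁ x g₁ H₁) (h₂ : HasLineJet w₂ x g₂ H₂) :
    HasLineJet (fun y => w₁ y + w₂ y) x (g₁ + g₂) (H₁ + H₂) := by
  intro ξ
  simpa [inner_add_left] using (h₁ ξ).add (h₂ ξ)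

lemma HasLineJet.const_mul {w : Euc N → ℝ} {x g : Euc N} {H : Euc N →L[ℝ] Euc N} (c : ℝ)
    (h : HasLineJet w x g H) : HasLineJet (fun y => c * w y) x (c • g) (c • H) := by
  intro ξ
  simpa [inner_smul_left] using (h ξ).const_mul c

lemma hasLineJet_const (c : ℝ) (x : Euc N) : HasLineJet (fun _ => c) x 0 0 := by
  intro ξ
  refine ⟨fun _ => 0, ?_, by simp, by simpa using hasDerivAt_const _ _⟩
  filter_upwards with s using hasDerivAt_const _ _

lemma hasDerivAt_line (x ξ : Euc N) (s : ℝ) : HasDerivAt (fun s : ℝ => x + s • ξ) ξ s := by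
  simpa using ((hasDerivAt_id s).smul_const ξ).const_add x

lemma tendsto_line (x ξ : Euc N) : Tendsto (fun s : ℝ => x + s • ξ) (𝓝 0) (𝓝 x) := by
  have : Continuous fun s : ℝ => x + s • ξ := by fun_prop
  simpa using this.tendsto 0

lemma IsLocalMax.comp_line {f : Euc N → ℝ} {x : Euc N} (h : IsLocalMax f x) (ξ : Euc N) :
    IsLocalMax (fun s : ℝ => f (x + s • ξ)) 0 := by
  have := (tendsto_line x ξ).eventually h
  simpa [IsLocalMax, IsMaxFilter] using this

lemma sum_inner_stretch (A : Euc N →L[ℝ] Euc N) {n : Euc N} (hn : ‖n‖ = 1) (d : ℝ) :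
    ∑ i, inner ℝ (A (EuclideanSpace.basisFun (Fin N) ℝ i
        + (d * inner ℝ n (EuclideanSpace.basisFun (Fin N) ℝ i)) • n))
      (EuclideanSpace.basisFun (Fin N) ℝ i
        + (d * inner ℝ n (EuclideanSpace.basisFun (Fin N) ℝ i)) • n) =
    LinearMap.trace ℝ (Euc N) (A : Euc N →ₗ[ℝ] Euc N) + (2 * d + d ^ 2) * inner ℝ (A n) n := by
  set b := EuclideanSpace.basisFun (Fin N) ℝ
  have h1 : ∑ i, inner ℝ n (b i) * inner ℝ (A n) (b i) = inner ℝ (A n) n := by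
    rw [← b.sum_inner_mul_inner (A n) n]
    refine Finset.sum_congr rfl fun i _ => ?_
    rw [real_inner_comm n (b i)]; ring
  have h2 : ∑ i, inner ℝ n (b i) * inner ℝ (A (b i)) n = inner ℝ (A n) n := by
    have : ∀ i, inner ℝ (A (b i)) n = inner ℝ (b i) (ContinuousLinearMap.adjoint A n) := fun i =>
      (ContinuousLinearMap.adjoint_inner_right A (b i) n).symm
    simp_rw [this]
    rw [b.sum_inner_mul_inner, ContinuousLinearMap.adjoint_inner_right]
  have h3 : ∑ i, inner ℝ n (b i) * inner ℝ n (b i) = 1 := by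
    have := b.sum_inner_mul_inner n n
    rw [real_inner_self_eq_norm_sq, hn, one_pow] at this
    refine Eq.trans ?_ this
    refine Finset.sum_congr rfl fun i _ => ?_
    rw [real_inner_comm n (b i)]
  have h4 : ∑ i, inner ℝ (A (b i)) (b i) =
      LinearMap.trace ℝ (Euc N) (A : Euc N →ₗ[ℝ] Euc N) := by
    rw [LinearMap.trace_eq_sum_inner _ b]
    refine Finset.sum_congr rfl fun i _ => ?_
    rw [real_inner_comm]; rfl
  have key : ∀ i, inner ℝ (A (b i + (d * inner ℝ n (b i)) • n)) (b i + (d * inner ℝ n (b i)) • n)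
      = inner ℝ (A (b i)) (b i) + d * (inner ℝ n (b i) * inner ℝ (A (b i)) n)
        + d * (inner ℝ n (b i) * inner ℝ (A n) (b i))
        + (d ^ 2 * inner ℝ (A n) n) * (inner ℝ n (b i) * inner ℝ n (b i)) := by
    intro i
    simp only [map_add, map_smul, inner_add_left, inner_add_right, inner_smul_left,
      inner_smul_right, conj_trivial]
    ring
  simp_rw [key, Finset.sum_add_distrib, ← Finset.mul_sum, h1, h2, h3, h4]
  ring

lemma pTrace_eq_unit {p : ℝ} {g : Euc N} (hg : g ≠ 0) (H : Euc N →L[ℝ] Euc N) :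
    pTrace p g H = LinearMap.trace ℝ (Euc N) (H : Euc N →ₗ[ℝ] Euc N)
      + (p - 2) * inner ℝ (H (‖g‖⁻¹ • g)) (‖g‖⁻¹ • g) := by
  have : ‖g‖ ≠ 0 := norm_ne_zero_iff.2 hg
  simp only [pTrace, map_smul, inner_smul_left, inner_smul_right, conj_trivial]
  field_simp

lemma norm_unit {g : Euc N} (hg : g ≠ 0) : ‖‖g‖⁻¹ • g‖ = 1 := by
  have : ‖g‖ ≠ 0 := norm_ne_zero_iff.2 hg
  rw [norm_smul, norm_inv, norm_norm, inv_mul_cancel₀ this]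

lemma pTrace_mono {p : ℝ} (hp : 1 < p) {g : Euc N} (hg : g ≠ 0) {A B : Euc N →L[ℝ] Euc N}
    (h : ∀ ξ, inner ℝ (A ξ) ξ ≤ inner ℝ (B ξ) ξ) : pTrace p g A ≤ pTrace p g B := by
  have hs := Real.sq_sqrt (show 0 ≤ p - 1 by linarith)
  have e : p - 2 = 2 * (√(p - 1) - 1) + (√(p - 1) - 1) ^ 2 := by linear_combination -hs
  rw [pTrace_eq_unit hg, pTrace_eq_unit hg, e, ← sum_inner_stretch A (norm_unit hg),
    ← sum_inner_stretch B (norm_unit hg)]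
  exact Finset.sum_le_sum fun i _ => h _

lemma pTrace_add (p : ℝ) (g : Euc N) (A B : Euc N →L[ℝ] Euc N) :
    pTrace p g (A + B) = pTrace p g A + pTrace p g B := by
  simp only [pTrace, ContinuousLinearMap.toLinearMap_add, map_add, add_apply, inner_add_left]
  ring

lemma pTrace_smul (p : ℝ) (g : Euc N) (c : ℝ) (A : Euc N →L[ℝ] Euc N) :
    pTrace p g (c • A) = c * pTrace p g A := by
  simp only [pTrace, ContinuousLinearMap.toLinearMap_smul, map_smul, smul_apply, inner_smul_left,
    smul_eq_mul, conj_trivial]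
  ring

lemma pTrace_smul_left (p : ℝ) {c : ℝ} (hc : c ≠ 0) (g : Euc N) (A : Euc N →L[ℝ] Euc N) :
    pTrace p (c • g) A = pTrace p g A := by
  simp only [pTrace, map_smul, inner_smul_left, inner_smul_right, norm_smul, mul_pow,
    conj_trivial, Real.norm_eq_abs, sq_abs]
  by_cases hg : g = 0
  · simp [hg]
  have : ‖g‖ ≠ 0 := norm_ne_zero_iff.2 hg
  field_simp

lemma hasDerivAt_line_gradient {w : Euc N → ℝ} {x : Euc N} (h : DifferentiableAt ℝ w x)
    (ξ : Euc N) :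
    HasDerivAt (fun s : ℝ => w (x + s • ξ)) (inner ℝ (gradient w x) ξ) 0 := by
  have h1 : HasFDerivAt w (fderiv ℝ w x) (x + (0 : ℝ) • ξ) := by simpa using h.hasFDerivAt
  have := h1.comp_hasDerivAt 0 (hasDerivAt_line x ξ 0)
  rwa [inner_gradient_left]

/-- Touching from above by a test function. -/
lemma SolAt.touch {p γ σ : ℝ} (hp : 1 < p) {w v : Euc N → ℝ} {x P : Euc N}
    {B : Euc N →L[ℝ] Euc N} (hw : SolAt p γ σ w x) (hv : HasLineJet v x P B) (hP : P ≠ 0)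
    (hm : IsLocalMax (fun y => w y - v y) x) : σ * ‖P‖ ^ γ ≤ pTrace p P B := by
  obtain ⟨hd, hH⟩ := hw
  have hg : gradient w x = P := by
    refine ext_inner_right ℝ fun ξ => ?_
    have := (hm.comp_line ξ).hasDerivAt_eq_zero
      ((hasDerivAt_line_gradient hd ξ).sub (hv ξ).hasDerivAt)
    linarith
  rw [hg] at hH
  obtain ⟨H, hj, he⟩ := hH hP
  rw [← he]
  refine pTrace_mono hp hP fun ξ => ?_
  have := ((hj ξ).sub (hv ξ)).nonpos_of_isLocalMax (hm.comp_line ξ)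
  linarith

lemma SolAt.neg {p γ σ : ℝ} {w : Euc N → ℝ} {x : Euc N} (hw : SolAt p γ σ w x) :
    SolAt p γ (-σ) (fun y => -w y) x := by
  obtain ⟨hd, hH⟩ := hw
  have hg : gradient (fun y => -w y) x = -gradient w x :=
    HasGradientAt.gradient (by
      rw [hasGradientAt_iff_hasFDerivAt, map_neg]
      exact (hasGradientAt_iff_hasFDerivAt.1 hd.hasGradientAt).neg)
  refine ⟨hd.neg, fun h => ?_⟩
  rw [hg] at h ⊢
  obtain ⟨H, hj, he⟩ := hH (by simpa using h)
  refine ⟨(-1 : ℝ) • H, ?_, ?_⟩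
  · simpa using hj.const_mul (-1)
  · have h1 := pTrace_smul_left p (show (-1 : ℝ) ≠ 0 by norm_num) (gradient w x) ((-1 : ℝ) • H)
    rw [neg_one_smul] at h1
    rw [h1, pTrace_smul, he, norm_neg]; ring

/-- The Hessian `a I + b d ⊗ d`. -/
noncomputable def radialHess (d : Euc N) (a b : ℝ) : Euc N →L[ℝ] Euc N :=
  a • ContinuousLinearMap.id ℝ (Euc N) + b • (innerSL ℝ d).smulRight d

lemma radialHess_apply (d : Euc N) (a b : ℝ) (ξ : Euc N) :
    radialHess d a b ξ = a • ξ + (b * inner ℝ d ξ) • d := by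
  simp [radialHess, smul_smul]

lemma inner_radialHess (d : Euc N) (a b : ℝ) (ξ : Euc N) :
    inner ℝ (radialHess d a b ξ) ξ = a * ‖ξ‖ ^ 2 + b * inner ℝ d ξ ^ 2 := by
  rw [radialHess_apply, inner_add_left, inner_smul_left, inner_smul_left,
    real_inner_self_eq_norm_sq]
  simp only [conj_trivial]
  ring

lemma trace_radialHess (d : Euc N) (a b : ℝ) :
    LinearMap.trace ℝ (Euc N) (radialHess d a b : Euc N →ₗ[ℝ] Euc N) = a * N + b * ‖d‖ ^ 2 := by
  rw [LinearMap.trace_eq_sum_inner _ (EuclideanSpace.basisFun (Fin N) ℝ)]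
  set e := EuclideanSpace.basisFun (Fin N) ℝ
  have h : ∀ i, inner ℝ (e i) ((radialHess d a b : Euc N →ₗ[ℝ] Euc N) (e i)) =
      a + b * (inner ℝ d (e i) * inner ℝ (e i) d) := by
    intro i
    rw [ContinuousLinearMap.coe_coe, radialHess_apply, inner_add_right, inner_smul_right,
      inner_smul_right, real_inner_self_eq_norm_sq, e.norm_eq_one]
    ring
  simp_rw [h, Finset.sum_add_distrib, ← Finset.mul_sum]
  rw [e.sum_inner_mul_inner, real_inner_self_eq_norm_sq]
  simp [mul_comm]

lemma pTrace_radialHess (p : ℝ) {g : Euc N} (hg : g ≠ 0) (d : Euc N) (a b : ℝ) :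
    pTrace p g (radialHess d a b) =
      a * (N + p - 2) + b * (‖d‖ ^ 2 + (p - 2) * (inner ℝ d g ^ 2 / ‖g‖ ^ 2)) := by
  have : ‖g‖ ≠ 0 := norm_ne_zero_iff.2 hg
  rw [pTrace, trace_radialHess, radialHess_apply, inner_add_left, inner_smul_left,
    inner_smul_left, real_inner_self_eq_norm_sq]
  simp only [conj_trivial]
  field_simp
  ring

lemma hasDerivAt_norm_line {d ξ : Euc N} {s : ℝ} (h : d + s • ξ ≠ 0) :
    HasDerivAt (fun s : ℝ => ‖d + s • ξ‖) (inner ℝ (d + s • ξ) ξ / ‖d + s • ξ‖) s := by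
  have h1 := (hasDerivAt_line d ξ s).norm_sq
  have h2 := h1.sqrt (by simpa using h)
  have e : (fun s : ℝ => ‖d + s • ξ‖) = fun s : ℝ => √(‖d + s • ξ‖ ^ 2) := by
    funext s; rw [Real.sqrt_sq (norm_nonneg _)]
  rw [e]
  convert h2 using 1
  rw [Real.sqrt_sq (norm_nonneg _)]
  ring

lemma hasLineJet_radial {f f₁ : ℝ → ℝ} {f₂ : ℝ} {x z : Euc N} (hxz : x ≠ z)
    (hf : ∀ᶠ t in 𝓝 ‖x - z‖, HasDerivAt f (f₁ t) t) (hf₁ : HasDerivAt f₁ f₂ ‖x - z‖) :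
    HasLineJet (fun y => f ‖y - z‖) x ((f₁ ‖x - z‖ / ‖x - z‖) • (x - z))
      (radialHess (x - z) (f₁ ‖x - z‖ / ‖x - z‖)
        ((f₂ - f₁ ‖x - z‖ / ‖x - z‖) / ‖x - z‖ ^ 2)) := by
  intro ξ
  have hd : x - z ≠ 0 := sub_ne_zero.2 hxz
  have hn : ‖x - z‖ ≠ 0 := norm_ne_zero_iff.2 hd
  have e : (fun s : ℝ => f ‖x + s • ξ - z‖) = fun s : ℝ => f ‖(x - z) + s • ξ‖ := by
    funext s; congr 2; abel
  rw [e]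
  generalize x - z = d at *
  have hne : ∀ᶠ s : ℝ in 𝓝 0, d + s • ξ ≠ 0 :=
    (tendsto_line d ξ).eventually (isOpen_ne.mem_nhds hd)
  have hnorm : Tendsto (fun s : ℝ => ‖d + s • ξ‖) (𝓝 0) (𝓝 ‖d‖) := (tendsto_line d ξ).norm
  refine ⟨fun s => f₁ ‖d + s • ξ‖ * (inner ℝ (d + s • ξ) ξ / ‖d + s • ξ‖), ?_, ?_, ?_⟩
  · filter_upwards [hne, hnorm.eventually hf] with s hs1 hs2
    exact hs2.comp s (hasDerivAt_norm_line hs1)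
  · simp [inner_smul_left]; ring
  · have h0 : d + (0 : ℝ) • ξ = d := by simp
    have h1 : HasDerivAt (fun s : ℝ => ‖d + s • ξ‖) (inner ℝ d ξ / ‖d‖) 0 := by
      have := hasDerivAt_norm_line (d := d) (ξ := ξ) (s := 0) (by simpa using hd)
      simpa using this
    have h2 : HasDerivAt (fun s : ℝ => f₁ ‖d + s • ξ‖) (f₂ * (inner ℝ d ξ / ‖d‖)) 0 :=
      HasDerivAt.comp (h₂ := f₁) 0 (by simpa using hf₁) h1
    have h3 : HasDerivAt (fun s : ℝ => inner ℝ (d + s • ξ) ξ) (‖ξ‖ ^ 2) 0 := by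
      have := (hasDerivAt_line d ξ 0).inner ℝ (hasDerivAt_const (0 : ℝ) ξ)
      simpa using this
    refine (h2.mul (h3.div h1 (by simpa using hn))).congr_deriv ?_
    simp only [inner_radialHess, Pi.div_apply, h0]
    field_simp
    ring

/-- A continuous function on a compact set is nonpositive if it has no positive local maximum. -/
lemma nonpos_of_no_localMax {K : Set (Euc N)} (hK : IsCompact K) {D : Euc N → ℝ}
    (hD : ContinuousOn D K)
    (h : ∀ x ∈ K, 0 < D x → K ∈ 𝓝 x ∧ ¬ IsLocalMax D x) : ∀ x ∈ K, D x ≤ 0 := by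
  intro x hx
  obtain ⟨y, hy, hmax⟩ := hK.exists_isMaxOn ⟨x, hx⟩ hD
  by_contra! hpos
  obtain ⟨h1, h2⟩ := h y hy (hpos.trans_le (hmax hx))
  exact h2 (hmax.isLocalMax h1)

/-- The closed annulus `a ≤ |x - z| ≤ b`. -/
def annulus (z : Euc N) (a b : ℝ) : Set (Euc N) := {x | a ≤ ‖x - z‖ ∧ ‖x - z‖ ≤ b}

lemma isCompact_annulus (z : Euc N) (a b : ℝ) : IsCompact (annulus z a b) := by
  refine (isCompact_closedBall z b).of_isClosed_subset ?_ fun x hx => ?_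
  · have hc : Continuous fun x : Euc N => ‖x - z‖ := by fun_prop
    exact (isClosed_le continuous_const hc).inter (isClosed_le hc continuous_const)
  · rw [mem_closedBall, dist_eq_norm]; exact hx.2

lemma annulus_mem_nhds {z x : Euc N} {a b : ℝ} (h1 : a < ‖x - z‖) (h2 : ‖x - z‖ < b) :
    annulus z a b ∈ 𝓝 x := by
  have hc : ContinuousAt (fun y : Euc N => ‖y - z‖) x := by fun_prop
  filter_upwards [hc.eventually_const_lt h1, hc.eventually_lt_const h2] with y hy1 hy2
  exact ⟨hy1.le, hy2.le⟩

/-- Comparison with a test function on an annulus. -/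
lemma annulus_comparison {p γ σ : ℝ} (hp : 1 < p) {w v : Euc N → ℝ} {z : Euc N} {a b : ℝ}
    (hw : ∀ x ∈ annulus z a b, SolAt p γ σ w x) (hv : ContinuousOn v (annulus z a b))
    (hjet : ∀ x, a < ‖x - z‖ → ‖x - z‖ < b → ∃ P B, HasLineJet v x P B ∧ P ≠ 0 ∧
      pTrace p P B < σ * ‖P‖ ^ γ)
    (ha : ∀ x, ‖x - z‖ = a → w x ≤ v x) (hb : ∀ x, ‖x - z‖ = b → w x ≤ v x) :
    ∀ x ∈ annulus z a b, w x ≤ v x := by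
  intro x hx
  refine sub_nonpos.1 (nonpos_of_no_localMax (isCompact_annulus z a b) (D := fun y => w y - v y)
    (ContinuousOn.sub (fun y hy => (hw y hy).1.continuousAt.continuousWithinAt) hv) ?_ x hx)
  intro y hy hpos
  rcases hy.1.eq_or_lt with h1 | h1
  · linarith [ha y h1.symm]
  rcases hy.2.eq_or_lt with h2 | h2
  · linarith [hb y h2]
  refine ⟨annulus_mem_nhds h1 h2, fun hm => ?_⟩
  obtain ⟨P, B, hj, hP, hlt⟩ := hjet y h1 h2
  exact absurd ((hw y hy).touch hp hj hP hm) (not_le.2 hlt)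

/-- Comparison with a radial function around the origin. -/
lemma radial_comparison {p γ σ : ℝ} (hp : 1 < p) {w : Euc N → ℝ} {a b : ℝ} (ha0 : 0 < a)
    (hw : ∀ x ∈ annulus (0 : Euc N) a b, SolAt p γ σ w x) {f f₁ f₂ : ℝ → ℝ} {c : ℝ} (hc : c < a)
    (hf : ∀ t, c < t → HasDerivAt f (f₁ t) t) (hf₁ : ∀ t, c < t → HasDerivAt f₁ (f₂ t) t)
    (hne : ∀ t, a < t → t < b → f₁ t ≠ 0)
    (hlt : ∀ t, a < t → t < b → (N - 1) * (f₁ t / t) + (p - 1) * f₂ t < σ * |f₁ t| ^ γ)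
    (ha : ∀ x : Euc N, ‖x‖ = a → w x ≤ f a) (hb : ∀ x : Euc N, ‖x‖ = b → w x ≤ f b) :
    ∀ x : Euc N, a ≤ ‖x‖ → ‖x‖ ≤ b → w x ≤ f ‖x‖ := by
  intro x hxa hxb
  have key := annulus_comparison (z := 0) (v := fun y => f ‖y - 0‖) hp hw ?_ ?_ ?_ ?_ x
    ⟨by simpa using hxa, by simpa using hxb⟩
  · simpa using key
  · intro y hy
    have h1 : ContinuousAt f ‖y - 0‖ := (hf _ (hc.trans_le hy.1)).continuousAt
    exact (ContinuousAt.comp (f := fun y : Euc N => ‖y - 0‖) h1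
      (by fun_prop)).continuousWithinAt
  · intro y hya hyb
    have hy0 : y ≠ 0 := by
      rintro rfl
      simp at hya; linarith
    refine ⟨_, _, hasLineJet_radial hy0
      ((lt_mem_nhds (hc.trans hya)).mono fun t ht => hf t ht) (hf₁ _ (hc.trans hya)), ?_, ?_⟩
    · rw [sub_zero] at *
      exact smul_ne_zero (div_ne_zero (hne _ hya hyb) (norm_ne_zero_iff.2 hy0)) hy0
    · rw [sub_zero] at *
      have hn : ‖y‖ ≠ 0 := norm_ne_zero_iff.2 hy0
      have h1 : f₁ ‖y‖ / ‖y‖ ≠ 0 := div_ne_zero (hne _ hya hyb) hn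
      rw [pTrace_smul_left p h1, pTrace_radialHess p hy0, real_inner_self_eq_norm_sq, norm_smul,
        norm_div, norm_norm, div_mul_cancel₀ _ hn, Real.norm_eq_abs]
      refine lt_of_eq_of_lt ?_ (hlt _ hya hyb)
      have := hne _ hya hyb
      field_simp
      ring
  · intro y hy
    rw [sub_zero] at hy
    simpa [hy] using ha y hy
  · intro y hy
    rw [sub_zero] at hy
    simpa [hy] using hb y hy

lemma sum_inner_basis (a c : Euc N) :
    ∑ i, inner ℝ a (EuclideanSpace.basisFun (Fin N) ℝ i)
      * inner ℝ c (EuclideanSpace.basisFun (Fin N) ℝ i) = inner ℝ a c := by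
  rw [← (EuclideanSpace.basisFun (Fin N) ℝ).sum_inner_mul_inner a c]
  exact Finset.sum_congr rfl fun i _ => by rw [real_inner_comm c]

lemma gram_le (P q : Euc N) :
    ‖q‖ ^ 2 * ‖P‖ ^ 2 - inner ℝ q P ^ 2 ≤ ‖P - q‖ ^ 2 * ‖P‖ ^ 2 := by
  have h1 := norm_sub_sq_real P q
  rw [real_inner_comm] at h1
  nlinarith [sq_nonneg (‖P‖ ^ 2 - inner ℝ q P)]

lemma hasSecondDeriv_norm_sq (x z ξ : Euc N) :
    HasSecondDeriv (fun s : ℝ => ‖x + s • ξ - z‖ ^ 2) (2 * inner ℝ (x - z) ξ) (2 * ‖ξ‖ ^ 2) := by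
  refine ⟨fun s => 2 * inner ℝ (x + s • ξ - z) ξ, ?_, by simp, ?_⟩
  · filter_upwards with s using ((hasDerivAt_line x ξ s).sub_const z).norm_sq
  · have := ((hasDerivAt_line x ξ 0).sub_const z).inner ℝ (hasDerivAt_const (0 : ℝ) ξ)
    simpa using this.const_mul 2

lemma hasDerivAt_sqrt_aux (L : ℝ) {t : ℝ} (ht : 0 < t) :
    HasDerivAt (fun t => L * √t) (L / (2 * √t)) t ∧
    HasDerivAt (fun t => L / (2 * √t)) (-(L / (4 * √t ^ 3))) t := by
  have h := Real.hasDerivAt_sqrt ht.ne'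
  have hs : √t ≠ 0 := (Real.sqrt_pos.2 ht).ne'
  refine ⟨(h.const_mul L).congr_deriv (by ring), ?_⟩
  refine ((hasDerivAt_const t L).div (h.const_mul 2) (by simpa using hs)).congr_deriv ?_
  field_simp
  ring

/-- The gain produced by coupling along the reflection with respect to `n`. -/
lemma sum_coupling {n e : Euc N} (hn : ‖n‖ = 1) (he : ‖e‖ = 1) (c : ℝ) :
    ∑ i, ((1 / 2) * ‖(c * inner ℝ e (EuclideanSpace.basisFun (Fin N) ℝ i)) • e
        + ((2 + c) * inner ℝ n (EuclideanSpace.basisFun (Fin N) ℝ i)) • n‖ ^ 2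
      - (3 / 4) * inner ℝ n ((c * inner ℝ e (EuclideanSpace.basisFun (Fin N) ℝ i)) • e
        + ((2 + c) * inner ℝ n (EuclideanSpace.basisFun (Fin N) ℝ i)) • n) ^ 2) =
    -(1 + c) ^ 2 + (1 - inner ℝ n e ^ 2) * ((3 / 4) * c ^ 2 + (1 / 2) * c * (2 + c)) := by
  set b := EuclideanSpace.basisFun (Fin N) ℝ
  have h1 := sum_inner_basis e e
  have h2 := sum_inner_basis n e
  have h3 := sum_inner_basis n n
  rw [real_inner_self_eq_norm_sq, he] at h1
  rw [real_inner_self_eq_norm_sq, hn] at h3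
  have key : ∀ i, ((1 / 2) * ‖(c * inner ℝ e (b i)) • e + ((2 + c) * inner ℝ n (b i)) • n‖ ^ 2
      - (3 / 4) * inner ℝ n ((c * inner ℝ e (b i)) • e + ((2 + c) * inner ℝ n (b i)) • n) ^ 2) =
      ((1 / 2) * c ^ 2 - (3 / 4) * c ^ 2 * inner ℝ n e ^ 2) * (inner ℝ e (b i) * inner ℝ e (b i))
      + (-(1 / 2) * c * (2 + c) * inner ℝ n e) * (inner ℝ n (b i) * inner ℝ e (b i))
      + (-(1 / 4) * (2 + c) ^ 2) * (inner ℝ n (b i) * inner ℝ n (b i)) := by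
    intro i
    rw [norm_add_sq_real, norm_smul, norm_smul, inner_add_right, inner_smul_left,
      inner_smul_right, inner_smul_right, inner_smul_right, real_inner_self_eq_norm_sq, hn, he,
      real_inner_comm n e]
    simp only [conj_trivial, mul_one, Real.norm_eq_abs, sq_abs]
    ring
  simp_rw [key, Finset.sum_add_distrib, ← Finset.mul_sum]
  rw [h1, h2, h3]
  ring

lemma exists_large {γ C c₁ c₂ d : ℝ} (hγ : γ < 2) (hd : 0 < d) :
    ∃ l₀ : ℝ, 4 ≤ l₀ ∧ ∀ l, l₀ ≤ l → C * (2 * l) ^ γ + c₁ < d * l ^ 2 ∧ c₂ ≤ d * l ^ 2 := by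
  have h1 : Tendsto (fun l : ℝ => C * 2 ^ γ * l ^ (-(2 - γ)) + (c₁ + |c₂|) * l ^ (-(2 : ℝ))) atTop
      (𝓝 (C * 2 ^ γ * 0 + (c₁ + |c₂|) * 0)) :=
    ((tendsto_rpow_neg_atTop (by linarith)).const_mul _).add
      ((tendsto_rpow_neg_atTop (by norm_num)).const_mul _)
  have h2 : Tendsto (fun l : ℝ => |c₂| * l ^ (-(2 : ℝ))) atTop (𝓝 (|c₂| * 0)) :=
    (tendsto_rpow_neg_atTop (by norm_num)).const_mul _
  simp only [mul_zero, add_zero] at h1 h2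
  obtain ⟨l₀, hl₀⟩ := eventually_atTop.1
    ((h1.eventually_lt_const hd).and (h2.eventually_lt_const hd))
  refine ⟨max l₀ 4, le_max_right _ _, fun l hl => ?_⟩
  obtain ⟨h3, h4⟩ := hl₀ l ((le_max_left _ _).trans hl)
  have hl0 : 0 < l := by linarith [(le_max_right l₀ 4).trans hl]
  have e1 : l ^ (-(2 - γ)) = l ^ γ / l ^ 2 := by
    rw [neg_sub, Real.rpow_sub hl0, Real.rpow_two]
  have e2 : l ^ (-(2 : ℝ)) = 1 / l ^ 2 := by
    rw [Real.rpow_neg hl0.le, Real.rpow_two, one_div]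
  have hl2 : 0 < l ^ 2 := by positivity
  rw [e2, mul_one_div, div_lt_iff₀ hl2] at h4
  rw [e1, e2, mul_one_div, ← mul_div_assoc, ← add_div, div_lt_iff₀ hl2] at h3
  rw [Real.mul_rpow (by norm_num) hl0.le]
  constructor
  · nlinarith [abs_nonneg c₂]
  · linarith [le_abs_self c₂]

set_option maxHeartbeats 1000000 in
/-- Interior Hölder estimate, by doubling of variables. -/
theorem holder_estimate (N : ℕ) {p γ E : ℝ} (hp : 1 < p) (hγ0 : 0 ≤ γ) (hγ : γ < 2) (hE : 0 ≤ E) :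
    ∃ L : ℝ, 0 < L ∧ ∀ (w : Euc N → ℝ) (σ : ℝ) (x₀ : Euc N), |σ| ≤ E →
      (∀ x ∈ closedBall x₀ 1, SolAt p γ σ w x) →
      (∀ x ∈ closedBall x₀ 1, ∀ y ∈ closedBall x₀ 1, w x - w y ≤ 1) →
      ∀ y ∈ closedBall x₀ 1, w x₀ - w y ≤ L * √‖x₀ - y‖ := by
  set c := √(p - 1) - 1 with hc
  set C := (3 / 4) * c ^ 2 + (1 / 2) * |c| * |2 + c| with hC
  have hC0 : 0 ≤ C := by positivity
  have hc1 : (1 + c) ^ 2 = p - 1 := by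
    rw [hc, add_sub_cancel, Real.sq_sqrt (by linarith)]
  obtain ⟨l₀, hl₀, hl⟩ := exists_large (γ := γ) (C := E) (c₁ := 8 * (N + p - 2))
    (c₂ := 16 * C * 4) (d := 2 * (p - 1)) hγ (by linarith)
  refine ⟨2 * l₀, by linarith, ?_⟩
  set L := 2 * l₀ with hL
  intro w σ x₀ hσ hw hosc y₀ hy₀
  set f : ℝ → ℝ := fun t => L * √t with hf
  by_contra! hcon
  have hcont : ContinuousOn w (closedBall x₀ 1) := fun x hx =>
    (hw x hx).1.continuousAt.continuousWithinAt
  set Φ : Euc N × Euc N → ℝ := fun z => w z.1 - w z.2 - f ‖z.1 - z.2‖ - 4 * ‖z.1 - x₀‖ ^ 2 with hΦ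
  have hΦc : ContinuousOn Φ (closedBall x₀ 1 ×ˢ closedBall x₀ 1) := by
    have h1 : ContinuousOn (fun z : Euc N × Euc N => w z.1) (closedBall x₀ 1 ×ˢ closedBall x₀ 1) :=
      hcont.comp continuousOn_fst fun z hz => hz.1
    have h2 : ContinuousOn (fun z : Euc N × Euc N => w z.2) (closedBall x₀ 1 ×ˢ closedBall x₀ 1) :=
      hcont.comp continuousOn_snd fun z hz => hz.2
    have h3 : Continuous fun z : Euc N × Euc N => f ‖z.1 - z.2‖ := by
      simp only [hf]; fun_prop
    have h4 : Continuous fun z : Euc N × Euc N => 4 * ‖z.1 - x₀‖ ^ 2 := by fun_prop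
    exact ((h1.sub h2).sub h3.continuousOn).sub h4.continuousOn
  have hx₀ : x₀ ∈ closedBall x₀ 1 := mem_closedBall_self zero_le_one
  obtain ⟨⟨x, y⟩, ⟨hx, hy⟩, hmax⟩ :=
    ((isCompact_closedBall x₀ 1).prod (isCompact_closedBall x₀ 1)).exists_isMaxOn
      ⟨(x₀, y₀), hx₀, hy₀⟩ hΦc
  simp only at hx hy
  have hpos : 0 < w x - w y - f ‖x - y‖ - 4 * ‖x - x₀‖ ^ 2 := by
    have h1 : Φ (x₀, y₀) ≤ Φ (x, y) := hmax ⟨hx₀, hy₀⟩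
    simp only [hΦ, hf, sub_self, norm_zero] at h1 ⊢
    norm_num at h1
    linarith
  have hfn : 0 ≤ f ‖x - y‖ := by simp only [hf]; positivity
  have ho := hosc x hx y hy
  have hxy : x ≠ y := by
    rintro rfl
    have : 0 ≤ 4 * ‖x - x₀‖ ^ 2 := by positivity
    linarith
  have hxx : ‖x - x₀‖ < 1 / 2 := by
    nlinarith [norm_nonneg (x - x₀)]
  have ht : 0 < ‖x - y‖ := norm_pos_iff.2 (sub_ne_zero.2 hxy)
  set τ := √‖x - y‖ with hτ
  have hτ0 : 0 < τ := Real.sqrt_pos.2 ht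
  have hτ2 : τ ^ 2 = ‖x - y‖ := Real.sq_sqrt ht.le
  have hLτ : L * τ < 1 := by
    have : f ‖x - y‖ = L * τ := rfl
    nlinarith [sq_nonneg ‖x - x₀‖]
  have hτ1 : τ < 1 / 8 := by nlinarith
  have hyy : ‖y - x₀‖ < 1 := by
    have : y - x₀ = (x - x₀) - (x - y) := by abel
    rw [this]
    refine (norm_sub_le _ _).trans_lt ?_
    rw [← hτ2]; nlinarith
  have hlines : ∀ ξ η : Euc N, IsLocalMax (fun s : ℝ => w (x + s • ξ) - w (y + s • η)
      - f ‖(x - y) + s • (ξ - η) - 0‖ - 4 * ‖x + s • ξ - x₀‖ ^ 2) 0 := by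
    intro ξ η
    have h1 : ∀ᶠ s : ℝ in 𝓝 0, x + s • ξ ∈ closedBall x₀ 1 :=
      (tendsto_line x ξ).eventually (closedBall_mem_nhds_of_mem (by
        rw [mem_ball, dist_eq_norm]; linarith))
    have h2 : ∀ᶠ s : ℝ in 𝓝 0, y + s • η ∈ closedBall x₀ 1 :=
      (tendsto_line y η).eventually (closedBall_mem_nhds_of_mem (by
        rw [mem_ball, dist_eq_norm]; exact hyy))
    filter_upwards [h1, h2] with s hs1 hs2
    have h3 : Φ (x + s • ξ, y + s • η) ≤ Φ (x, y) := hmax ⟨hs1, hs2⟩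
    have e : x - y + s • (ξ - η) - 0 = x + s • ξ - (y + s • η) := by
      rw [smul_sub]; abel
    simp only [e, zero_smul, add_zero, sub_zero]
    exact h3
  have hjf : HasLineJet (fun z => f ‖z - 0‖) (x - y) _ _ :=
    hasLineJet_radial (f₁ := fun t => L / (2 * √t)) (f₂ := -(L / (4 * τ ^ 3)))
      (sub_ne_zero.2 hxy)
      (by
        rw [sub_zero]
        exact (lt_mem_nhds ht).mono fun t ht => (hasDerivAt_sqrt_aux L ht).1)
      (by rw [sub_zero]; exact (hasDerivAt_sqrt_aux L ht).2)
  rw [sub_zero, ← hτ2, Real.sqrt_sq hτ0.le] at hjf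
  obtain ⟨hdx, hHx⟩ := hw x hx
  obtain ⟨hdy, hHy⟩ := hw y hy
  set q : Euc N := (L / (2 * τ) / τ ^ 2) • (x - y) with hq
  set l := L / (2 * τ) with hl_def
  have hl1 : l₀ ≤ l := by
    rw [hl_def, le_div_iff₀ (by positivity)]; nlinarith
  have hlpos : 0 < l := by linarith
  have hqn : ‖q‖ = l := by
    rw [hq, norm_smul, ← hτ2, Real.norm_of_nonneg (by positivity)]
    field_simp
  have hq0 : q ≠ 0 := by rw [← norm_pos_iff, hqn]; exact hlpos
  have hgy : gradient w y = q := by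
    refine ext_inner_right ℝ fun η => ?_
    have h := (hlines 0 η).hasDerivAt_eq_zero
      ((((hasDerivAt_line_gradient hdx 0).sub (hasDerivAt_line_gradient hdy η)).sub
        (hjf (0 - η)).hasDerivAt).sub ((hasSecondDeriv_norm_sq x x₀ 0).hasDerivAt.const_mul 4))
    simp only [inner_zero_right, zero_sub, inner_neg_right] at h
    linarith
  have hgx : gradient w x = q + (8 : ℝ) • (x - x₀) := by
    refine ext_inner_right ℝ fun ξ => ?_
    have h := (hlines ξ 0).hasDerivAt_eq_zero
      ((((hasDerivAt_line_gradient hdx ξ).sub (hasDerivAt_line_gradient hdy 0)).sub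
        (hjf (ξ - 0)).hasDerivAt).sub ((hasSecondDeriv_norm_sq x x₀ ξ).hasDerivAt.const_mul 4))
    simp only [inner_zero_right, sub_zero] at h
    have e8 : inner ℝ ((8 : ℝ) • (x - x₀)) ξ = 8 * inner ℝ (x - x₀) ξ := by
      rw [inner_smul_left, conj_trivial]
    rw [inner_add_left, e8]
    linarith
  set P := gradient w x with hP
  have hPq : ‖P - q‖ ≤ 4 := by
    rw [hgx, add_sub_cancel_left, norm_smul]
    norm_num; linarith
  have hPn : ‖P‖ ≤ 2 * l := by
    have := norm_le_norm_add_norm_sub' P q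
    linarith
  have hP0 : P ≠ 0 := by
    intro h0
    rw [h0, zero_sub, norm_neg, hqn] at hPq
    have hl4 : l = 4 := by linarith
    have : ‖P - q‖ < 4 := by
      rw [hgx, add_sub_cancel_left, norm_smul]
      norm_num; linarith
    rw [h0, zero_sub, norm_neg, hqn] at this
    linarith
  rw [hgy] at hHy
  obtain ⟨A, hjA, hA⟩ := hHx hP0
  obtain ⟨B, hjB, hB⟩ := hHy hq0
  set n := ‖q‖⁻¹ • q with hn
  set e := ‖P‖⁻¹ • P with he
  have hn1 : ‖n‖ = 1 := norm_unit hq0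
  have he1 : ‖e‖ = 1 := norm_unit hP0
  have hnxy : x - y = (τ ^ 2) • n := by
    rw [hn, hqn, hq, smul_smul, smul_smul]
    have : τ ^ 2 * l⁻¹ * (l / τ ^ 2) = 1 := by field_simp
    rw [this, one_smul]
  have hsec : ∀ ξ η : Euc N, inner ℝ (A ξ) ξ - inner ℝ (B η) η ≤
      L / τ ^ 3 * ((1 / 2) * ‖ξ - η‖ ^ 2 - (3 / 4) * inner ℝ n (ξ - η) ^ 2) + 8 * ‖ξ‖ ^ 2 := by
    intro ξ η
    have h := ((((hjA ξ).sub (hjB η)).sub (hjf (ξ - η))).sub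
      ((hasSecondDeriv_norm_sq x x₀ ξ).const_mul 4)).nonpos_of_isLocalMax (hlines ξ η)
    rw [inner_radialHess, hnxy, inner_smul_left, conj_trivial] at h
    have e : l / τ ^ 2 * ‖ξ - η‖ ^ 2 + (-(L / (4 * τ ^ 3)) - l / τ ^ 2) / (τ ^ 2) ^ 2
        * (τ ^ 2 * inner ℝ n (ξ - η)) ^ 2 =
      L / τ ^ 3 * ((1 / 2) * ‖ξ - η‖ ^ 2 - (3 / 4) * inner ℝ n (ξ - η) ^ 2) := by
      rw [hl_def]; field_simp; ring
    linarith
  have hsum := Finset.sum_le_sum fun (i : Fin N) (_ : i ∈ Finset.univ) => hsec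
    (EuclideanSpace.basisFun (Fin N) ℝ i
      + (c * inner ℝ e (EuclideanSpace.basisFun (Fin N) ℝ i)) • e)
    (EuclideanSpace.basisFun (Fin N) ℝ i
      + ((-(2 + c)) * inner ℝ n (EuclideanSpace.basisFun (Fin N) ℝ i)) • n)
  have hζ : ∀ i, (EuclideanSpace.basisFun (Fin N) ℝ i
      + (c * inner ℝ e (EuclideanSpace.basisFun (Fin N) ℝ i)) • e) -
      (EuclideanSpace.basisFun (Fin N) ℝ i
      + ((-(2 + c)) * inner ℝ n (EuclideanSpace.basisFun (Fin N) ℝ i)) • n) =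
      (c * inner ℝ e (EuclideanSpace.basisFun (Fin N) ℝ i)) • e
        + ((2 + c) * inner ℝ n (EuclideanSpace.basisFun (Fin N) ℝ i)) • n := by
    intro i
    rw [neg_mul, neg_smul]; abel
  have hid := sum_inner_stretch (ContinuousLinearMap.id ℝ (Euc N)) he1 c
  simp only [ContinuousLinearMap.id_apply, real_inner_self_eq_norm_sq, he1,
    ContinuousLinearMap.coe_id, LinearMap.trace_id] at hid
  simp_rw [hζ] at hsum
  rw [Finset.sum_sub_distrib, sum_inner_stretch A he1, sum_inner_stretch B hn1,
    Finset.sum_add_distrib, ← Finset.mul_sum, ← Finset.mul_sum, sum_coupling hn1 he1, hid] at hsum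
  rw [pTrace_eq_unit hP0] at hA
  rw [pTrace_eq_unit hq0] at hB
  have hp2 : p - 2 = 2 * c + c ^ 2 := by linear_combination -hc1
  have hp3 : p - 2 = 2 * (-(2 + c)) + (-(2 + c)) ^ 2 := by linear_combination -hc1
  rw [← hp2, hA, ← hp3, hB, hc1] at hsum
  have hrank : (Module.finrank ℝ (Euc N) : ℝ) = N := by simp
  rw [hrank] at hsum
  obtain ⟨hl2, hl3⟩ := hl l hl1
  have hθ : 1 - inner ℝ n e ^ 2 ≤ 16 / l ^ 2 := by
    have hg := gram_le P q
    have hne : inner ℝ n e = inner ℝ q P / (‖q‖ * ‖P‖) := by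
      rw [hn, he, inner_smul_left, inner_smul_right, conj_trivial]
      field_simp
    have hPp : 0 < ‖P‖ := norm_pos_iff.2 hP0
    rw [hne, le_div_iff₀ (by positivity), div_pow, hqn]
    rw [hqn] at hg
    have : (1 - inner ℝ q P ^ 2 / (l * ‖P‖) ^ 2) * l ^ 2 =
        (l ^ 2 * ‖P‖ ^ 2 - inner ℝ q P ^ 2) / ‖P‖ ^ 2 := by
      field_simp
    rw [this, div_le_iff₀ (by positivity)]
    have h16 : ‖P - q‖ ^ 2 ≤ 16 := by
      have := pow_le_pow_left₀ (norm_nonneg _) hPq 2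
      linarith
    exact hg.trans (mul_le_mul_of_nonneg_right h16 (sq_nonneg _))
  have hθ0 : 0 ≤ 1 - inner ℝ n e ^ 2 := by
    have := abs_real_inner_le_norm n e
    rw [hn1, he1, mul_one] at this
    nlinarith [abs_le.1 this, sq_abs (inner ℝ n e), abs_nonneg (inner ℝ n e)]
  have hS : (1 - inner ℝ n e ^ 2) * ((3 / 4) * c ^ 2 + (1 / 2) * c * (2 + c)) ≤ (p - 1) / 2 := by
    have h1 : (3 / 4) * c ^ 2 + (1 / 2) * c * (2 + c) ≤ C := by
      have := le_abs_self (c * (2 + c))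
      rw [abs_mul] at this
      rw [hC]; linarith
    have h2 : 16 / l ^ 2 * C ≤ (p - 1) / 2 := by
      rw [div_mul_eq_mul_div, div_le_iff₀ (by positivity)]; linarith
    calc _ ≤ (1 - inner ℝ n e ^ 2) * C := mul_le_mul_of_nonneg_left h1 hθ0
      _ ≤ 16 / l ^ 2 * C := mul_le_mul_of_nonneg_right hθ hC0
      _ ≤ _ := h2
  have hcoef : 4 * l ^ 2 ≤ L / τ ^ 3 := by
    rw [hl_def, le_div_iff₀ (by positivity)]
    have : 4 * (L / (2 * τ)) ^ 2 * τ ^ 3 = L * (L * τ) := by field_simp; ring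
    rw [this]
    nlinarith
  have hLHS : -(E * (2 * l) ^ γ) ≤ σ * ‖P‖ ^ γ - σ * ‖q‖ ^ γ := by
    have h1 : ‖P‖ ^ γ ≤ (2 * l) ^ γ := Real.rpow_le_rpow (norm_nonneg _) hPn hγ0
    have h2 : ‖q‖ ^ γ ≤ (2 * l) ^ γ := Real.rpow_le_rpow (norm_nonneg _) (by linarith) hγ0
    have h3 : 0 ≤ ‖P‖ ^ γ := by positivity
    have h4 : 0 ≤ ‖q‖ ^ γ := by positivity
    have h5 : |‖P‖ ^ γ - ‖q‖ ^ γ| ≤ (2 * l) ^ γ := abs_le.2 ⟨by linarith, by linarith⟩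
    have h6 : |σ * (‖P‖ ^ γ - ‖q‖ ^ γ)| ≤ E * (2 * l) ^ γ := by
      rw [abs_mul]; exact mul_le_mul hσ h5 (abs_nonneg _) hE
    have := (abs_le.1 h6).1
    linarith
  have hfin : L / τ ^ 3 * (-(p - 1) + (1 - inner ℝ n e ^ 2) *
      ((3 / 4) * c ^ 2 + (1 / 2) * c * (2 + c))) ≤ 4 * l ^ 2 * (-((p - 1) / 2)) := by
    have h1 : 0 ≤ L / τ ^ 3 := by positivity
    calc _ ≤ L / τ ^ 3 * (-((p - 1) / 2)) := mul_le_mul_of_nonneg_left (by linarith) h1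
      _ ≤ _ := mul_le_mul_of_nonpos_right hcoef (by linarith)
  linarith

lemma hasDerivAt_const_mul_rpow (k a : ℝ) {t : ℝ} (ht : 0 < t) :
    HasDerivAt (fun t : ℝ => k * t ^ a) (k * a * t ^ (a - 1)) t :=
  ((Real.hasDerivAt_rpow_const (Or.inl ht.ne')).const_mul k).congr_deriv (by ring)

/-- Jet of a radial power. -/
lemma hasLineJet_rpow (k a : ℝ) {x z : Euc N} (h : x ≠ z) :
    HasLineJet (fun y => k * ‖y - z‖ ^ a) x ((k * a * ‖x - z‖ ^ (a - 2)) • (x - z))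
      (radialHess (x - z) (k * a * ‖x - z‖ ^ (a - 2))
        (k * a * (a - 2) * ‖x - z‖ ^ (a - 2) / ‖x - z‖ ^ 2)) := by
  have hd : 0 < ‖x - z‖ := norm_pos_iff.2 (sub_ne_zero.2 h)
  have hj := hasLineJet_radial (f := fun t => k * t ^ a) (f₁ := fun t => k * a * t ^ (a - 1))
    (f₂ := k * a * (a - 1) * ‖x - z‖ ^ (a - 1 - 1)) h
    ((lt_mem_nhds hd).mono fun t ht => hasDerivAt_const_mul_rpow k a ht)
    (hasDerivAt_const_mul_rpow (k * a) (a - 1) hd)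
  have e1 : k * a * ‖x - z‖ ^ (a - 1) / ‖x - z‖ = k * a * ‖x - z‖ ^ (a - 2) := by
    rw [show a - 1 = (a - 2) + 1 by ring, Real.rpow_add_one hd.ne']
    field_simp
  have e2 : a - 1 - 1 = a - 2 := by ring
  rw [e1, e2] at hj
  convert hj using 2
  ring

lemma pTrace_fundamental_le {p s κ : ℝ} (hs : s * (p - 1) = N - 1) (hs1 : 1 ≤ s) (hκ : 0 ≤ κ)
    {y P : Euc N} (hy : 1 ≤ ‖y‖) (hP : P ≠ 0) :
    pTrace p P (radialHess y (κ * (1 - s) * ‖y‖ ^ (1 - s - 2))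
      (κ * (1 - s) * (1 - s - 2) * ‖y‖ ^ (1 - s - 2) / ‖y‖ ^ 2)) ≤
    (s + 1) * |p - 2| * ‖P - (κ * (1 - s) * ‖y‖ ^ (1 - s - 2)) • y‖ := by
  set k := κ * (s - 1) * ‖y‖ ^ (1 - s - 2) with hk
  have hk0 : 0 ≤ k := by
    have : 0 ≤ s - 1 := by linarith
    positivity
  have e : κ * (1 - s) * ‖y‖ ^ (1 - s - 2) = -k := by rw [hk]; ring
  have e' : κ * (1 - s) * (1 - s - 2) * ‖y‖ ^ (1 - s - 2) = k * (s + 1) := by rw [hk]; ring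
  rw [pTrace_radialHess p hP, e, e']
  have hPn : 0 < ‖P‖ := norm_pos_iff.2 hP
  have hyn : 0 < ‖y‖ := by linarith
  set X := inner ℝ y P ^ 2 / (‖y‖ ^ 2 * ‖P‖ ^ 2) with hX
  have hX0 : 0 ≤ X := by positivity
  have hX1 : X ≤ 1 := by
    rw [hX, div_le_one (by positivity)]
    have := abs_real_inner_le_norm y P
    rw [← mul_pow, ← sq_abs]
    exact pow_le_pow_left₀ (abs_nonneg _) this 2
  have hg := gram_le P ((-k) • y)
  rw [inner_smul_left, conj_trivial, norm_smul, Real.norm_eq_abs, abs_neg, abs_of_nonneg hk0] at hg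
  set D := ‖P - (-k) • y‖ with hD
  have hgX : (k * ‖y‖) ^ 2 * (1 - X) ≤ D ^ 2 := by
    have : (k * ‖y‖) ^ 2 * (1 - X) =
        ((k * ‖y‖) ^ 2 * ‖P‖ ^ 2 - (-k * inner ℝ y P) ^ 2) / ‖P‖ ^ 2 := by
      rw [hX]; field_simp
    rw [this, div_le_iff₀ (by positivity)]
    exact hg
  have hD0 : 0 ≤ D := norm_nonneg _
  have hkX : k * (1 - X) ≤ D := by
    refine abs_le_of_sq_le_sq' ?_ hD0 |>.2
    have h1 : k ^ 2 ≤ (k * ‖y‖) ^ 2 := pow_le_pow_left₀ hk0 (le_mul_of_one_le_right hk0 hy) 2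
    have h2 : (1 - X) ^ 2 ≤ 1 - X := by nlinarith
    calc (k * (1 - X)) ^ 2 = k ^ 2 * (1 - X) ^ 2 := by ring
      _ ≤ (k * ‖y‖) ^ 2 * (1 - X) := mul_le_mul h1 h2 (sq_nonneg _) (sq_nonneg _)
      _ ≤ _ := hgX
  have hkX0 : 0 ≤ k * (1 - X) := mul_nonneg hk0 (by linarith)
  have hNp : (N : ℝ) + p - 2 = (s + 1) * (p - 1) := by linarith
  have : -k * (↑N + p - 2) + k * (s + 1) / ‖y‖ ^ 2 *
      (‖y‖ ^ 2 + (p - 2) * (inner ℝ y P ^ 2 / ‖P‖ ^ 2)) =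
      (s + 1) * ((-(p - 2)) * (k * (1 - X))) := by
    rw [hNp, hX]; field_simp; ring
  rw [this, mul_assoc (s + 1)]
  refine mul_le_mul_of_nonneg_left ?_ (show 0 ≤ s + 1 by linarith)
  calc -(p - 2) * (k * (1 - X)) ≤ |p - 2| * (k * (1 - X)) :=
        mul_le_mul_of_nonneg_right (neg_le_abs _) hkX0
    _ ≤ _ := mul_le_mul_of_nonneg_left hkX (abs_nonneg _)

lemma pTrace_power_ge {p α : ℝ} (hα : 0 < α) {D P : Euc N} (hD : D ≠ 0) (hP : P ≠ 0) :
    α * ‖D‖ ^ (-α - 2) * ((α + 2) * min 1 (p - 1) - (N + p - 2)) ≤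
    pTrace p P (radialHess D (-α * ‖D‖ ^ (-α - 2))
      (-α * (-α - 2) * ‖D‖ ^ (-α - 2) / ‖D‖ ^ 2)) := by
  rw [pTrace_radialHess p hP]
  have hPn : 0 < ‖P‖ := norm_pos_iff.2 hP
  have hDn : 0 < ‖D‖ := norm_pos_iff.2 hD
  set X := inner ℝ D P ^ 2 / (‖D‖ ^ 2 * ‖P‖ ^ 2) with hX
  have hX0 : 0 ≤ X := by positivity
  have hX1 : X ≤ 1 := by
    rw [hX, div_le_one (by positivity)]
    have := abs_real_inner_le_norm D P
    rw [← mul_pow, ← sq_abs]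
    exact pow_le_pow_left₀ (abs_nonneg _) this 2
  set k := ‖D‖ ^ (-α - 2) with hk
  have hk0 : 0 < k := by positivity
  have : -α * k * (↑N + p - 2) + -α * (-α - 2) * k / ‖D‖ ^ 2 *
      (‖D‖ ^ 2 + (p - 2) * (inner ℝ D P ^ 2 / ‖P‖ ^ 2)) =
      α * k * ((α + 2) * (1 + (p - 2) * X) - (N + p - 2)) := by
    rw [hX]; field_simp; ring
  rw [this]
  refine mul_le_mul_of_nonneg_left ?_ (by positivity)
  have hm : min 1 (p - 1) ≤ 1 + (p - 2) * X := by
    rcases le_total 0 (p - 2) with h | h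
    · exact (min_le_left _ _).trans (by nlinarith)
    · exact (min_le_right _ _).trans (by nlinarith)
  nlinarith

/-- Propagation of a strict gap below the function `κ |y|^{1-s} + ε` from a ball to its double. -/
lemma gap_double {p γ E κ s ρ δ : ℝ} (hp : 1 < p) (hγ : 1 ≤ γ) (hs : s * (p - 1) = N - 1)
    (hs1 : 1 ≤ s) (hE : 0 ≤ E) (hκ : 0 ≤ κ) (hρ : 0 < ρ) (hρ' : 3 * ρ ≤ 1 / 4) (hδ : 0 < δ) :
    ∃ δ' > 0, ∀ (w : Euc N → ℝ) (σ ε : ℝ) (z : Euc N), |σ| ≤ E → (κ * (s - 1) = 0 ∨ 0 ≤ σ) →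
      (∀ y ∈ annulus (0 : Euc N) 1 3, SolAt p γ σ w y) →
      (∀ y ∈ annulus (0 : Euc N) 1 3, w y ≤ κ * ‖y‖ ^ (1 - s) + ε) →
      5 / 4 ≤ ‖z‖ → ‖z‖ ≤ 2 →
      (∀ y ∈ closedBall z ρ, w y ≤ κ * ‖y‖ ^ (1 - s) + ε - δ) →
      ∀ y ∈ closedBall z (2 * ρ), w y ≤ κ * ‖y‖ ^ (1 - s) + ε - δ' := by
  have hmin : 0 < min 1 (p - 1) := lt_min one_pos (by linarith)
  set C := (s + 1) * |p - 2| with hC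
  have hC0 : 0 ≤ C := by positivity
  obtain ⟨α, hα0, hα⟩ : ∃ α > 0, C + E < (α + 2) * min 1 (p - 1) - (N + p - 2) := by
    refine ⟨(C + E + N + p) / min 1 (p - 1), by positivity, ?_⟩
    rw [add_mul, div_mul_cancel₀ _ hmin.ne']
    linarith
  set K := κ * (s - 1) with hK
  have hK0 : 0 ≤ K := mul_nonneg hκ (by linarith)
  set M := α * ρ ^ (-α - 1) with hM
  have hM0 : 0 < M := by positivity
  have hpow : 0 < ρ ^ (-α) := by positivity
  obtain ⟨η, hη0, hη1, hη2, hη3⟩ : ∃ η > 0, η * M ≤ 1 ∧ (K ≠ 0 → η * M < K * 3 ^ (-s)) ∧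
      η * ρ ^ (-α) ≤ δ := by
    have h1 : Tendsto (fun η : ℝ => η * M) (𝓝[>] 0) (𝓝 0) := by
      have : Continuous fun η : ℝ => η * M := by fun_prop
      simpa using (this.tendsto 0).mono_left nhdsWithin_le_nhds
    have h2 : Tendsto (fun η : ℝ => η * ρ ^ (-α)) (𝓝[>] 0) (𝓝 0) := by
      have : Continuous fun η : ℝ => η * ρ ^ (-α) := by fun_prop
      simpa using (this.tendsto 0).mono_left nhdsWithin_le_nhds
    have h3 : ∀ᶠ η : ℝ in 𝓝[>] 0, K ≠ 0 → η * M < K * 3 ^ (-s) := by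
      by_cases hK' : K = 0
      · exact Eventually.of_forall fun _ h => absurd hK' h
      · have : 0 < K * 3 ^ (-s) := by positivity
        exact (h1.eventually_lt_const this).mono fun _ h _ => h
    obtain ⟨η, h⟩ := (((h1.eventually_lt_const one_pos).and h3).and
      ((h2.eventually_lt_const hδ).and self_mem_nhdsWithin)).exists
    exact ⟨η, h.2.2, h.1.1.le, h.1.2, h.2.1.le⟩
  have hdec : ∀ {a b : ℝ}, 0 < a → a < b → b ^ (-α) < a ^ (-α) := fun ha hab =>
    Real.rpow_lt_rpow_of_neg ha hab (by linarith)
  have hgap : 0 < η * ((2 * ρ) ^ (-α) - (3 * ρ) ^ (-α)) :=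
    mul_pos hη0 (sub_pos.2 (hdec (by linarith) (by linarith)))
  refine ⟨min δ _, lt_min hδ hgap, ?_⟩
  intro w σ ε z hσ hsig hw hle hz1 hz2 hball y hy
  have hin : ∀ y, ‖y - z‖ ≤ 3 * ρ → y ∈ annulus (0 : Euc N) 1 3 := by
    intro y hy
    have h1 := norm_sub_norm_le z y
    have h2 := norm_le_norm_add_norm_sub' y z
    rw [norm_sub_rev] at h1
    constructor <;> rw [sub_zero] <;> linarith
  rw [mem_closedBall, dist_eq_norm] at hy
  rcases le_or_gt ‖y - z‖ ρ with hyρ | hyρ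
  · have := hball y (by rwa [mem_closedBall, dist_eq_norm])
    linarith [min_le_left δ (η * ((2 * ρ) ^ (-α) - (3 * ρ) ^ (-α)))]
  have key := annulus_comparison (a := ρ) (b := 3 * ρ)
    (v := fun y => (κ * ‖y - 0‖ ^ (1 - s) + ε) +
      (-η) * (1 * ‖y - z‖ ^ (-α) + (-(3 * ρ) ^ (-α)))) hp
    (fun x hx => hw x (hin x hx.2)) ?_ ?_ ?_ ?_ y ⟨hyρ.le, by linarith⟩
  · rw [sub_zero] at key
    have h1 : (2 * ρ) ^ (-α) ≤ ‖y - z‖ ^ (-α) := by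
      rcases hy.eq_or_lt with h | h
      · rw [h]
      · exact (hdec (by linarith) h).le
    have := min_le_right δ (η * ((2 * ρ) ^ (-α) - (3 * ρ) ^ (-α)))
    nlinarith
  · intro x hx
    have hx0 : ‖x - 0‖ ≠ 0 := by linarith [(hin x hx.2).1]
    have hxz : ‖x - z‖ ≠ 0 := by linarith [hx.1]
    refine ContinuousAt.continuousWithinAt ?_
    have c1 : ContinuousAt (fun y : Euc N => ‖y - 0‖ ^ (1 - s)) x :=
      ContinuousAt.rpow_const (by fun_prop) (Or.inl hx0)
    have c2 : ContinuousAt (fun y : Euc N => ‖y - z‖ ^ (-α)) x :=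
      ContinuousAt.rpow_const (by fun_prop) (Or.inl hxz)
    exact ((continuousAt_const.mul c1).add continuousAt_const).add
      (continuousAt_const.mul ((continuousAt_const.mul c2).add continuousAt_const))
  · intro x hx1 hx2
    have hxa := hin x hx2.le
    have hx0 : x ≠ 0 := by
      rintro rfl
      have := hxa.1
      simp at this
      linarith
    have hxz : x ≠ z := by
      rintro rfl
      rw [sub_self, norm_zero] at hx1
      linarith
    have hj := ((hasLineJet_rpow κ (1 - s) hx0).add (hasLineJet_const ε x)).add
      (((hasLineJet_rpow 1 (-α) hxz).add (hasLineJet_const (-(3 * ρ) ^ (-α)) x)).const_mul (-η))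
    simp only [sub_zero, add_zero, one_mul] at hj
    set d := ‖x - z‖ with hd
    have hd0 : 0 < d := norm_pos_iff.2 (sub_ne_zero.2 hxz)
    have hd1 : d ≤ 1 := by linarith
    set Q : Euc N := (κ * (1 - s) * ‖x‖ ^ (1 - s - 2)) • x with hQ
    set R : Euc N := -η • (-α * d ^ (-α - 2)) • (x - z) with hR
    have hRn : ‖R‖ = η * (α * d ^ (-α - 2)) * d := by
      rw [hR, norm_smul, norm_smul, norm_neg, ← hd, Real.norm_of_nonneg hη0.le, neg_mul, norm_neg,
        Real.norm_of_nonneg (by positivity)]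
      ring
    have hRd : ‖R‖ ≤ η * M := by
      have e1 : d ^ (-α - 2) * d = d ^ (-α - 1) := by
        rw [← Real.rpow_add_one hd0.ne']; ring_nf
      have e2 : d ^ (-α - 1) ≤ ρ ^ (-α - 1) :=
        Real.rpow_le_rpow_of_nonpos hρ hx1.le (by linarith)
      rw [hRn, hM, mul_assoc, mul_assoc, e1]
      gcongr
    have hR0 : 0 < ‖R‖ := by rw [hRn]; positivity
    have hx1' : 1 ≤ ‖x‖ := by simpa using hxa.1
    have hx3 : ‖x‖ ≤ 3 := by simpa using hxa.2
    have hQn : ‖Q‖ = K * ‖x‖ ^ (-s) := by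
      have hxp : 0 < ‖x‖ := by linarith
      have e1 : κ * (1 - s) * ‖x‖ ^ (1 - s - 2) = -(K * ‖x‖ ^ (1 - s - 2)) := by rw [hK]; ring
      have e2 : ‖x‖ ^ (1 - s - 2) * ‖x‖ = ‖x‖ ^ (-s) := by
        rw [← Real.rpow_add_one hxp.ne']; ring_nf
      rw [hQ, norm_smul, e1, norm_neg, Real.norm_of_nonneg (by positivity), mul_assoc, e2]
    have hQK : K = 0 → Q = 0 := fun h => by
      rw [← norm_eq_zero, hQn, h, zero_mul]
    have hP : Q + R ≠ 0 := by
      intro h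
      by_cases hK' : K = 0
      · rw [hQK hK', zero_add] at h
        rw [h, norm_zero] at hR0
        exact hR0.false
      · have h1 := hη2 hK'
        have h2 : (3 : ℝ) ^ (-s) ≤ ‖x‖ ^ (-s) :=
          Real.rpow_le_rpow_of_nonpos (by linarith) hx3 (by linarith)
        have h3 : ‖Q‖ = ‖R‖ := by rw [eq_neg_of_add_eq_zero_left h, norm_neg]
        have h4 : K * 3 ^ (-s) ≤ K * ‖x‖ ^ (-s) := mul_le_mul_of_nonneg_left h2 hK0
        linarith
    refine ⟨Q + R, _, by simpa only [sub_zero, one_mul] using hj, hP, ?_⟩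
    have h1 := pTrace_fundamental_le (p := p) hs hs1 hκ hx1' hP
    have h2 := pTrace_power_ge (p := p) hα0 (sub_ne_zero.2 hxz) hP
    rw [← hQ, add_sub_cancel_left] at h1
    rw [← hd] at h2
    rw [pTrace_add, pTrace_smul]
    have h3 : -(E * ‖R‖) ≤ σ * ‖Q + R‖ ^ γ := by
      rcases hsig with h | h
      · rw [hQK h, zero_add]
        have h4 : ‖R‖ ^ γ ≤ ‖R‖ := by
          simpa using Real.rpow_le_rpow_of_exponent_ge hR0 (hRd.trans hη1) hγ
        have h5 : 0 ≤ ‖R‖ ^ γ := by positivity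
        have h6 := (abs_le.1 hσ).1
        nlinarith
      · have : 0 ≤ σ * ‖Q + R‖ ^ γ := by positivity
        have : 0 ≤ E * ‖R‖ := by positivity
        linarith
    have h4 : (C + E) * ‖R‖ < η * (α * d ^ (-α - 2) * ((α + 2) * min 1 (p - 1) - (N + p - 2))) := by
      have hk : 0 < η * (α * d ^ (-α - 2)) := by positivity
      calc (C + E) * ‖R‖ = η * (α * d ^ (-α - 2)) * (d * (C + E)) := by rw [hRn]; ring
        _ ≤ η * (α * d ^ (-α - 2)) * (C + E) :=
            mul_le_mul_of_nonneg_left (mul_le_of_le_one_left (by positivity) hd1) hk.le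
        _ < η * (α * d ^ (-α - 2)) * ((α + 2) * min 1 (p - 1) - (N + p - 2)) :=
            mul_lt_mul_of_pos_left hα hk
        _ = _ := by ring
    have h5 := mul_le_mul_of_nonneg_left h2 hη0.le
    linarith
  · intro x hx
    have h1 := hball x (by rw [mem_closedBall, dist_eq_norm, hx])
    have h2 : 0 < (3 * ρ) ^ (-α) := by positivity
    rw [sub_zero, hx]
    nlinarith
  · intro x hx
    rw [sub_zero, hx]
    have := hle x (hin x hx.le)
    linarith

lemma exists_chain {ι : Type*} (G : ι → ℝ → Euc N → Prop) (good : Euc N → Prop) {ρ : ℝ}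
    (hstep : ∀ δ > 0, ∃ δ' > 0, ∀ i z, good z → G i δ z → ∀ z', ‖z' - z‖ ≤ ρ → G i δ' z')
    (n : ℕ) : ∀ δ > 0, ∃ δ' > 0, ∀ i, ∀ c : ℕ → Euc N,
      (∀ k < n, good (c k) ∧ ‖c (k + 1) - c k‖ ≤ ρ) → G i δ (c 0) → G i δ' (c n) := by
  induction n with
  | zero => exact fun δ hδ => ⟨δ, hδ, fun i c _ h => h⟩
  | succ n ih =>
    intro δ hδ
    obtain ⟨δ₁, hδ₁, h₁⟩ := ih δ hδ
    obtain ⟨δ₂, hδ₂, h₂⟩ := hstep δ₁ hδ₁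
    refine ⟨δ₂, hδ₂, fun i c hc h => ?_⟩
    exact h₂ i (c n) (hc n n.lt_succ_self).1
      (h₁ i c (fun k hk => hc k (hk.trans n.lt_succ_self)) h) _ (hc n n.lt_succ_self).2

lemma exists_segment_chain {x y : Euc N} (hx : ‖x‖ = 2) (hy : ‖y‖ = 2) (hxy : 0 ≤ inner ℝ x y)
    {ρ : ℝ} {n : ℕ} (hn : 0 < n) (hρ : 4 ≤ n * ρ) :
    ∃ c : ℕ → Euc N, c 0 = x ∧ c n = y ∧
      ∀ k < n, (5 / 4 ≤ ‖c k‖ ∧ ‖c k‖ ≤ 2) ∧ ‖c (k + 1) - c k‖ ≤ ρ := by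
  have hn' : (0 : ℝ) < n := by exact_mod_cast hn
  refine ⟨fun k => (1 - (k : ℝ) / n) • x + ((k : ℝ) / n) • y, by simp, by simp [hn'.ne'], ?_⟩
  intro k hk
  set t : ℝ := (k : ℝ) / n with ht
  have ht0 : 0 ≤ t := by positivity
  have ht1 : t ≤ 1 := by
    rw [ht, div_le_one hn']; exact_mod_cast hk.le
  refine ⟨⟨?_, ?_⟩, ?_⟩
  · refine abs_le_of_sq_le_sq' ?_ (norm_nonneg _) |>.2
    rw [norm_add_sq_real, norm_smul, norm_smul, hx, hy, inner_smul_left, inner_smul_right,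
      Real.norm_of_nonneg ht0, Real.norm_of_nonneg (by linarith : 0 ≤ 1 - t), conj_trivial]
    have : 0 ≤ (1 - t) * (t * inner ℝ x y) :=
      mul_nonneg (by linarith) (mul_nonneg ht0 hxy)
    nlinarith [sq_nonneg (2 * t - 1)]
  · refine (norm_add_le _ _).trans ?_
    rw [norm_smul, norm_smul, hx, hy, Real.norm_of_nonneg ht0,
      Real.norm_of_nonneg (by linarith : 0 ≤ 1 - t)]
    linarith
  · have : (1 - ((k + 1 : ℕ) : ℝ) / n) • x + (((k + 1 : ℕ) : ℝ) / n) • y -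
        ((1 - t) • x + t • y) = (1 / (n : ℝ)) • (y - x) := by
      have e : ((k + 1 : ℕ) : ℝ) / n = t + 1 / n := by rw [ht]; push_cast; ring
      rw [e]; module
    rw [this, norm_smul, Real.norm_of_nonneg (by positivity), one_div, inv_mul_le_iff₀ hn']
    exact (norm_sub_le _ _).trans (by rw [hx, hy]; linarith)

lemma exists_orthogonal_sphere (hN : 2 ≤ N) (x y : Euc N) :
    ∃ z : Euc N, ‖z‖ = 2 ∧ inner ℝ x z = 0 ∧ 0 ≤ inner ℝ z y := by
  obtain ⟨z, hz, hz0⟩ : ∃ z ∈ (ℝ ∙ x)ᗮ, z ≠ 0 := by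
    refine Submodule.exists_mem_ne_zero_of_ne_bot fun h => ?_
    have h1 := (ℝ ∙ x).finrank_add_finrank_orthogonal
    rw [h, finrank_bot, finrank_euclideanSpace_fin] at h1
    have h2 := finrank_span_le_card (R := ℝ) ({x} : Set (Euc N))
    rw [Set.toFinset_singleton, Finset.card_singleton] at h2
    omega
  rw [Submodule.mem_orthogonal_singleton_iff_inner_right] at hz
  have hn : ‖z‖ ≠ 0 := norm_ne_zero_iff.2 hz0
  have hu : ‖(2 * ‖z‖⁻¹) • z‖ = 2 := by
    rw [norm_smul, norm_mul, norm_inv, norm_norm, mul_assoc, inv_mul_cancel₀ hn]; norm_num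
  rcases le_total 0 (inner ℝ ((2 * ‖z‖⁻¹) • z) y) with h | h
  · exact ⟨_, hu, by rw [inner_smul_right, hz, mul_zero], h⟩
  · refine ⟨-((2 * ‖z‖⁻¹) • z), by rwa [norm_neg], ?_, by rw [inner_neg_left]; linarith⟩
    rw [inner_neg_right, inner_smul_right, hz, mul_zero, neg_zero]

/-- A strict gap at one point of the sphere of radius `2` propagates to the whole sphere. -/
theorem gap_propagation (hN : 2 ≤ N) {p γ E κ s δ : ℝ} (hp : 1 < p) (hγ : 1 ≤ γ) (hγ2 : γ < 2)
    (hs : s * (p - 1) = N - 1) (hs1 : 1 ≤ s) (hE : 0 ≤ E) (hκ : 0 ≤ κ) (hδ : 0 < δ) :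
    ∃ δ' > 0, ∀ (w : Euc N → ℝ) (σ ε : ℝ), |σ| ≤ E → (κ * (s - 1) = 0 ∨ 0 ≤ σ) →
      (∀ y ∈ annulus (0 : Euc N) 1 3, SolAt p γ σ w y) →
      (∀ y ∈ annulus (0 : Euc N) 1 3, ∀ y' ∈ annulus (0 : Euc N) 1 3, w y - w y' ≤ 1) →
      (∀ y ∈ annulus (0 : Euc N) 1 3, w y ≤ κ * ‖y‖ ^ (1 - s) + ε) →
      (∃ x : Euc N, ‖x‖ = 2 ∧ w x ≤ κ * 2 ^ (1 - s) + ε - δ) →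
      ∀ y : Euc N, ‖y‖ = 2 → w y ≤ κ * 2 ^ (1 - s) + ε - δ' := by
  obtain ⟨L, hL, hhol⟩ := holder_estimate N hp (by linarith) hγ2 hE
  obtain ⟨ρ, hρ0, hρ1, hρ2, hρ3⟩ : ∃ ρ > 0, ρ ≤ 1 / 12 ∧ L * √ρ ≤ δ / 4 ∧
      ∀ t : ℝ, |t - 2| ≤ ρ → κ * 2 ^ (1 - s) - κ * t ^ (1 - s) ≤ δ / 4 := by
    have h1 : Tendsto (fun ρ : ℝ => L * √ρ) (𝓝[>] 0) (𝓝 0) := by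
      have : Continuous fun ρ : ℝ => L * √ρ := by fun_prop
      simpa using (this.tendsto 0).mono_left nhdsWithin_le_nhds
    have h2 : ContinuousAt (fun t : ℝ => κ * 2 ^ (1 - s) - κ * t ^ (1 - s)) 2 := by
      have : ContinuousAt (fun t : ℝ => t ^ (1 - s)) 2 :=
        Real.continuousAt_rpow_const 2 _ (Or.inl two_ne_zero)
      fun_prop
    have h3 := h2.eventually_le_const (u := δ / 4) (by simpa using by positivity)
    obtain ⟨r, hr0, hr⟩ := Metric.eventually_nhds_iff.1 h3
    have h4 : ∀ᶠ ρ : ℝ in 𝓝[>] 0, ρ < min (1 / 12) r :=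
      nhdsWithin_le_nhds (eventually_lt_nhds (lt_min (by norm_num) hr0))
    obtain ⟨ρ, h5, h6, h7⟩ := ((h1.eventually_lt_const (show 0 < δ / 4 by positivity)).and
      (h4.and self_mem_nhdsWithin)).exists
    refine ⟨ρ, h7, (h6.trans_le (min_le_left _ _)).le, h5.le, fun t ht => hr ?_⟩
    rw [Real.dist_eq]
    exact ht.trans_lt (h6.trans_le (min_le_right _ _))
  set n := ⌈4 / ρ⌉₊ with hn
  have hn0 : 0 < n := Nat.ceil_pos.2 (by positivity)
  have hnρ : 4 ≤ n * ρ := by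
    rw [← div_le_iff₀ hρ0]; exact Nat.le_ceil _
  let ι := {i : (Euc N → ℝ) × ℝ × ℝ // |i.2.1| ≤ E ∧ (κ * (s - 1) = 0 ∨ 0 ≤ i.2.1) ∧
      (∀ y ∈ annulus (0 : Euc N) 1 3, SolAt p γ i.2.1 i.1 y) ∧
      (∀ y ∈ annulus (0 : Euc N) 1 3, i.1 y ≤ κ * ‖y‖ ^ (1 - s) + i.2.2)}
  let G : ι → ℝ → Euc N → Prop := fun i δ z =>
    ∀ y ∈ closedBall z ρ, i.1.1 y ≤ κ * ‖y‖ ^ (1 - s) + i.1.2.2 - δ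
  have hchain := exists_chain G (fun z => 5 / 4 ≤ ‖z‖ ∧ ‖z‖ ≤ 2) (ρ := ρ) (by
    intro δ hδ
    obtain ⟨δ', hδ', h⟩ := gap_double hp hγ hs hs1 hE hκ hρ0 (by linarith) hδ
    refine ⟨δ', hδ', fun i z hz hG z' hz' y hy => ?_⟩
    refine h i.1.1 i.1.2.1 i.1.2.2 z i.2.1 i.2.2.1 i.2.2.2.1 i.2.2.2.2 hz.1 hz.2 hG y ?_
    rw [mem_closedBall, dist_eq_norm] at hy ⊢
    have := norm_sub_le_norm_sub_add_norm_sub y z' z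
    linarith) n
  obtain ⟨δ₁, hδ₁, h₁⟩ := hchain (δ / 2) (by positivity)
  obtain ⟨δ₂, hδ₂, h₂⟩ := hchain δ₁ hδ₁
  refine ⟨δ₂, hδ₂, ?_⟩
  rintro w σ ε hσ hsig hw hosc hle ⟨x, hx, hwx⟩ y hy
  let i : ι := ⟨(w, σ, ε), hσ, hsig, hw, hle⟩
  have hin : ∀ y ∈ closedBall x 1, y ∈ annulus (0 : Euc N) 1 3 := by
    intro y hy
    rw [mem_closedBall, dist_eq_norm] at hy
    have h1 := norm_sub_norm_le x y
    have h2 := norm_le_norm_add_norm_sub' y x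
    rw [norm_sub_rev] at h1
    constructor <;> rw [sub_zero] <;> linarith
  have h0 : G i (δ / 2) x := by
    intro y hy
    have hy1 := closedBall_subset_closedBall (by linarith : ρ ≤ 1) hy
    have h1 := hhol (fun y => -w y) (-σ) x (by rwa [abs_neg]) (fun y hy => (hw y (hin y hy)).neg)
      (fun y hy y' hy' => by linarith [hosc y' (hin y' hy') y (hin y hy)]) y hy1
    rw [mem_closedBall, dist_eq_norm] at hy
    have h2 : L * √‖x - y‖ ≤ δ / 4 := by
      rw [norm_sub_rev]
      exact (mul_le_mul_of_nonneg_left (Real.sqrt_le_sqrt hy) hL.le).trans hρ2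
    have h3 := hρ3 ‖y‖ (by rw [← hx]; exact (abs_norm_sub_norm_le y x).trans hy)
    change w y ≤ κ * ‖y‖ ^ (1 - s) + ε - δ / 2
    linarith
  obtain ⟨z, hz, hxz, hzy⟩ := exists_orthogonal_sphere hN x y
  obtain ⟨c, hc0, hcn, hc⟩ := exists_segment_chain hx hz hxz.ge hn0 hnρ
  obtain ⟨c', hc0', hcn', hc'⟩ := exists_segment_chain hz hy hzy hn0 hnρ
  have h3 := h₁ i c hc (by rwa [hc0])
  have h4 := h₂ i c' hc' (by rwa [hc0', ← hcn])
  rw [hcn'] at h4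
  have := h4 y (mem_closedBall_self hρ0.le)
  rwa [hy] at this

lemma SolAt.scale {p γ : ℝ} {u : Euc N → ℝ} {r T : ℝ} (hr : 0 < r) (hT : 0 < T) {y : Euc N}
    (hu : SolAt p γ 1 u (r • y)) :
    SolAt p γ (T ^ (γ - 1) * r ^ (2 - γ)) (fun y => T⁻¹ * u (r • y)) y := by
  obtain ⟨hd, hH⟩ := hu
  have hg : HasGradientAt (fun y => T⁻¹ * u (r • y)) ((T⁻¹ * r) • gradient u (r • y)) y := by
    rw [hasGradientAt_iff_hasFDerivAt]
    have h1 := hasGradientAt_iff_hasFDerivAt.1 hd.hasGradientAt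
    have h2 : HasFDerivAt (fun y : Euc N => r • y) (r • ContinuousLinearMap.id ℝ (Euc N)) y :=
      (hasFDerivAt_id y).const_smul r
    refine ((h1.comp y h2).const_mul T⁻¹).congr_fderiv ?_
    ext ξ
    simp
    ring
  have hc : T⁻¹ * r ≠ 0 := by positivity
  refine ⟨(hasGradientAt_iff_hasFDerivAt.1 hg).differentiableAt, fun h => ?_⟩
  rw [hg.gradient] at h ⊢
  obtain ⟨H, hj, ht⟩ := hH (fun h0 => h (by rw [h0, smul_zero]))
  refine ⟨(T⁻¹ * r ^ 2) • H, fun ξ => ?_, ?_⟩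
  · have := (hj (r • ξ)).const_mul T⁻¹
    have e : (fun s : ℝ => T⁻¹ * u (r • y + s • r • ξ)) =
        fun s : ℝ => T⁻¹ * u (r • (y + s • ξ)) := by
      ext s
      rw [smul_add, smul_comm r s]
    rw [e] at this
    convert this using 1
    · rw [inner_smul_left, inner_smul_right, conj_trivial]; ring
    · rw [map_smul, smul_apply, inner_smul_left, inner_smul_left, inner_smul_right,
        conj_trivial]
      simp only [conj_trivial]
      ring
  · rw [pTrace_smul, pTrace_smul_left p hc, ht, norm_smul, Real.norm_of_nonneg (by positivity),
      Real.mul_rpow (by positivity) (norm_nonneg _), one_mul,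
      Real.mul_rpow (by positivity) hr.le, Real.inv_rpow hT.le, Real.rpow_sub hT,
      Real.rpow_sub hr, Real.rpow_one, Real.rpow_two]
    field_simp

/-- Strong solutions satisfy the equation in nondivergence form. -/
lemma IsStrongSolution.solAt {p q : ℝ} {G : Set (Euc N)} (hG : IsOpen G) {u : Euc N → ℝ}
    (hu : IsStrongSolution p q G u) {x : Euc N} (hx : x ∈ G) : SolAt p (q - p + 2) 1 u x := by
  obtain ⟨h1, h3, heq⟩ := hu
  have hgrad : gradient u = fun x => (InnerProductSpace.toDual ℝ (Euc N)).symm (fderiv ℝ u x) := rfl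
  have hgc : ContinuousOn (gradient u) G := by
    rw [hgrad]
    exact (InnerProductSpace.toDual ℝ (Euc N)).symm.continuous.comp_continuousOn
      (h1.continuousOn_fderiv_of_isOpen hG le_rfl)
  refine ⟨(h1.differentiableOn one_ne_zero).differentiableAt (hG.mem_nhds hx), fun hne => ?_⟩
  set U := {x | x ∈ G ∧ gradient u x ≠ 0} with hU
  have hUo : IsOpen U := hgc.isOpen_inter_preimage hG isOpen_compl_singleton
  have hgd : ∀ y ∈ U, DifferentiableAt ℝ (gradient u) y := by
    intro y hy
    have h4 : ContDiffAt ℝ 2 (fderiv ℝ u) y :=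
      (h3.contDiffAt (hUo.mem_nhds hy)).fderiv_right (by norm_num)
    rw [hgrad]
    exact ((InnerProductSpace.toDual ℝ (Euc N)).symm.toContinuousLinearEquiv.differentiableAt).comp
      y (h4.differentiableAt (by norm_num))
  have hxU : x ∈ U := ⟨hx, hne⟩
  set g := gradient u x with hg
  have hgn : 0 < ‖g‖ := norm_pos_iff.2 hne
  set H := fderiv ℝ (gradient u) x with hH
  have hHd : HasFDerivAt (gradient u) H x := (hgd x hxU).hasFDerivAt
  refine ⟨H, fun ξ => ⟨fun s => inner ℝ (gradient u (x + s • ξ)) ξ, ?_, by simp [hg], ?_⟩, ?_⟩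
  · filter_upwards [(tendsto_line x ξ).eventually (hG.mem_nhds hx)] with s hs
    have hd : DifferentiableAt ℝ u (x + s • ξ) :=
      (h1.differentiableOn one_ne_zero).differentiableAt (hG.mem_nhds hs)
    rw [inner_gradient_left]
    exact hd.hasFDerivAt.comp_hasDerivAt s (hasDerivAt_line x ξ s)
  · have h5 : HasFDerivAt (gradient u) H (x + (0 : ℝ) • ξ) := by simpa using hHd
    have := (h5.comp_hasDerivAt 0 (hasDerivAt_line x ξ 0)).inner ℝ (hasDerivAt_const (0 : ℝ) ξ)
    simpa using this
  · have hpow := hHd.norm_sq.rpow_const (p := (p - 2) / 2) (Or.inl (by positivity))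
    have hfield := hpow.smul hHd
    have e : pGradField p u = (fun y => (‖gradient u y‖ ^ 2) ^ ((p - 2) / 2)) • gradient u := by
      ext1 y
      simp only [pGradField, Pi.smul_apply']
      rw [← Real.rpow_natCast_mul (norm_nonneg _)]
      congr 2
      push_cast
      ring
    have ht := (heq x hx).2
    rw [e] at ht
    rw [HasFDerivAt.fderiv hfield, ContinuousLinearMap.toLinearMap_add, map_add,
      ContinuousLinearMap.toLinearMap_smul, map_smul, ContinuousLinearMap.coe_smulRight,
      LinearMap.trace_smulRight, ← hg] at ht
    simp only [smul_eq_mul, ContinuousLinearMap.coe_coe, smul_apply,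
      ContinuousLinearMap.comp_apply, innerSL_apply_apply, nsmul_eq_mul, Nat.cast_ofNat] at ht
    have e1 : (‖g‖ ^ 2) ^ ((p - 2) / 2) = ‖g‖ ^ (p - 2) := by
      rw [← Real.rpow_natCast_mul (norm_nonneg _)]
      congr 1
      push_cast
      ring
    rw [Real.rpow_sub_one (by positivity), e1, real_inner_comm] at ht
    have e2 : ‖g‖ ^ (q - p + 2) = ‖g‖ ^ q / ‖g‖ ^ (p - 2) := by
      rw [← Real.rpow_sub hgn]
      congr 1
      ring
    have e3 : 0 < ‖g‖ ^ (p - 2) := by positivity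
    rw [one_mul, e2, eq_div_iff e3.ne', ← ht, pTrace]
    field_simp

/-- Relations between the parameters in the subcritical range: `m = q + 1 - p`,
`s = (N - 1) / (p - 1)`, `β = β_q` and `b`. -/
structure Subcritical (N : ℕ) (p m s β b : ℝ) : Prop where
  hp : 1 < p
  hs : s * (p - 1) = N - 1
  hs1 : 1 ≤ s
  hm : 0 < m
  hsm : s * m < 1
  hβ : (β + 1) * m = 1
  hb : b = (p - 1) * (β + 1) - (N - 1)

namespace Subcritical
variable {p m s β b : ℝ}

lemma m_lt_one (h : Subcritical N p m s β b) : m < 1 := by nlinarith [h.hs1, h.hsm, h.hm]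

lemma lt_beta (h : Subcritical N p m s β b) : s - 1 < β := by
  have h1 := h.hβ
  have h2 := h.hsm
  have h3 := h.hm
  nlinarith

lemma beta_pos (h : Subcritical N p m s β b) : 0 < β := by linarith [h.lt_beta, h.hs1]

lemma b_pos (h : Subcritical N p m s β b) : 0 < b := by
  rw [h.hb, ← h.hs]
  nlinarith [h.lt_beta, h.hp]

lemma one_div_m (h : Subcritical N p m s β b) : 1 / m = β + 1 := by
  rw [div_eq_iff h.hm.ne', h.hβ]

end Subcritical

/-- A nonnegative solution on a punctured ball of radius `R ≤ 1`, bounded by `A` on its boundary. -/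
structure PuncturedSol (p m R A : ℝ) (u : Euc N → ℝ) : Prop where
  hR : 0 < R
  hR1 : R ≤ 1
  hA : 0 ≤ A
  sol : ∀ x : Euc N, 0 < ‖x‖ → ‖x‖ ≤ R → SolAt p (m + 1) 1 u x
  nonneg : ∀ x : Euc N, 0 < ‖x‖ → ‖x‖ ≤ R → 0 ≤ u x
  bdry : ∀ x : Euc N, ‖x‖ = R → u x ≤ A

/-- Radial profile of the fundamental solution, with derivative `-t^{-s}`. -/
noncomputable def radialFund (s t : ℝ) : ℝ :=
  if 1 < s then t ^ (1 - s) / (s - 1) else -Real.log t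

lemma hasDerivAt_radialFund {s t : ℝ} (hs : 1 ≤ s) (ht : 0 < t) :
    HasDerivAt (radialFund s) (-t ^ (-s)) t := by
  rcases hs.eq_or_lt with rfl | h
  · have e : radialFund 1 = fun t => -Real.log t := by
      ext t; simp [radialFund]
    rw [e, Real.rpow_neg_one]
    exact (Real.hasDerivAt_log ht.ne').neg
  · have e : radialFund s = fun t => t ^ (1 - s) / (s - 1) := by
      ext t; simp [radialFund, h]
    rw [e]
    refine ((Real.hasDerivAt_rpow_const (Or.inl ht.ne')).div_const _).congr_deriv ?_
    have : s - 1 ≠ 0 := by linarith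
    rw [show 1 - s - 1 = -s by ring]
    field_simp
    ring

lemma radialFund_nonneg {s t : ℝ} (ht : 0 < t) (ht1 : t ≤ 1) : 0 ≤ radialFund s t := by
  rw [radialFund]
  split_ifs with h
  · have : 0 < s - 1 := by linarith
    positivity
  · have := Real.log_nonpos ht.le ht1
    linarith

lemma tendsto_radialFund (s : ℝ) : Tendsto (radialFund s) (𝓝[>] 0) atTop := by
  by_cases h : 1 < s
  · have e : radialFund s = fun t => t ^ (1 - s) / (s - 1) := by
      ext t; simp [radialFund, h]
    rw [e]
    exact (tendsto_rpow_neg_nhdsGT_zero (by linarith)).atTop_div_const (by linarith)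
  · have e : radialFund s = fun t => -Real.log t := by
      ext t; simp [radialFund, h]
    rw [e]
    exact tendsto_neg_atBot_atTop.comp Real.tendsto_log_nhdsGT_zero

section Barriers
variable {p m s β b R A : ℝ} {u : Euc N → ℝ}

lemma PuncturedSol.solAt_annulus (hu : PuncturedSol p m R A u) {a b : ℝ} (ha : 0 < a) (hb : b ≤ R) :
    ∀ x ∈ annulus (0 : Euc N) a b, SolAt p (m + 1) 1 u x := by
  intro x hx
  have h1 := hx.1
  have h2 := hx.2
  rw [sub_zero] at h1 h2
  exact hu.sol x (by linarith) (by linarith)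

/-- Comparison with the fundamental solution. -/
lemma PuncturedSol.le_fund (hu : PuncturedSol p m R A u) (hP : Subcritical N p m s β b)
    {k B r r' : ℝ} (hk : 0 < k) (hr : 0 < r) (hr' : r' ≤ R)
    (h1 : ∀ x : Euc N, ‖x‖ = r → u x ≤ k * radialFund s r + B)
    (h2 : ∀ x : Euc N, ‖x‖ = r' → u x ≤ k * radialFund s r' + B) :
    ∀ x : Euc N, r ≤ ‖x‖ → ‖x‖ ≤ r' → u x ≤ k * radialFund s ‖x‖ + B := by
  refine radial_comparison (σ := 1) (γ := m + 1) (c := 0) (f := fun t => k * radialFund s t + B)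
    (f₁ := fun t => -k * t ^ (-s)) (f₂ := fun t => -k * (-s) * t ^ (-s - 1))
    hP.hp hr (hu.solAt_annulus hr hr') hr ?_ ?_ ?_ ?_ h1 h2
  · intro t ht
    exact (((hasDerivAt_radialFund hP.hs1 ht).const_mul k).add_const B).congr_deriv (by ring)
  · intro t ht
    exact hasDerivAt_const_mul_rpow (-k) (-s) ht
  · intro t ht _
    have : 0 < t := hr.trans ht
    have : 0 < t ^ (-s) := by positivity
    nlinarith
  · intro t ht _
    have ht0 : 0 < t := hr.trans ht
    have h3 : 0 < k * t ^ (-s) := by positivity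
    have h4 : (0 : ℝ) < 1 * |-k * t ^ (-s)| ^ (m + 1) := by
      rw [neg_mul, abs_neg, abs_of_pos h3]
      positivity
    refine lt_of_eq_of_lt ?_ h4
    rw [Real.rpow_sub_one ht0.ne', ← hP.hs]
    ring

lemma PuncturedSol.le_const (hu : PuncturedSol p m R A u) (hP : Subcritical N p m s β b)
    {B r r' : ℝ} (hr : 0 < r) (hr' : r' ≤ R)
    (h1 : ∀ x : Euc N, ‖x‖ = r → u x ≤ B) (h2 : ∀ x : Euc N, ‖x‖ = r' → u x ≤ B) :
    ∀ x : Euc N, r ≤ ‖x‖ → ‖x‖ ≤ r' → u x ≤ B := by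
  intro x hx hx'
  have hmu : ∀ t, 0 < t → t ≤ r' → 0 ≤ radialFund s t := fun t ht ht' =>
    radialFund_nonneg ht (ht'.trans (hr'.trans hu.hR1))
  have h3 : ∀ k : ℝ, 0 < k → u x ≤ k * radialFund s ‖x‖ + B := fun k hk =>
    hu.le_fund hP hk hr hr'
      (fun y hy => by
        have := mul_nonneg hk.le (hmu r hr (hx.trans hx'))
        linarith [h1 y hy])
      (fun y hy => by
        have := mul_nonneg hk.le (hmu r' (hr.trans_le (hx.trans hx')) le_rfl)
        linarith [h2 y hy]) x hx hx'
  have h4 : Tendsto (fun k : ℝ => k * radialFund s ‖x‖ + B) (𝓝[>] 0) (𝓝 B) := by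
    have : Continuous fun k : ℝ => k * radialFund s ‖x‖ + B := by fun_prop
    simpa using (this.tendsto 0).mono_left nhdsWithin_le_nhds
  exact ge_of_tendsto h4 (eventually_nhdsWithin_of_forall h3)

lemma PuncturedSol.exists_bound (hu : PuncturedSol p m R A u) {r : ℝ} (hr : 0 < r) :
    ∃ M, ∀ x : Euc N, r ≤ ‖x‖ → ‖x‖ ≤ R → u x ≤ M := by
  have hc : ContinuousOn u (annulus (0 : Euc N) r R) := fun x hx =>
    (hu.solAt_annulus hr le_rfl x hx).1.continuousAt.continuousWithinAt
  obtain ⟨M, hM⟩ := ((isCompact_annulus (0 : Euc N) r R).image_of_continuousOn hc).bddAbove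
  exact ⟨M, fun x h1 h2 => hM ⟨x, ⟨by rwa [sub_zero], by rwa [sub_zero]⟩, rfl⟩⟩

/-- The universal a priori upper bound. -/
lemma PuncturedSol.exists_rough (hu : PuncturedSol p m R A u) (hP : Subcritical N p m s β b) :
    ∃ C > 0, ∀ x : Euc N, 0 < ‖x‖ → ‖x‖ ≤ R → u x ≤ C * ‖x‖ ^ (-β) + A := by
  have hβ := hP.beta_pos
  obtain ⟨c, hc0, hc⟩ : ∃ c > 0, (p - 1) * (β + 1) < (c * β) ^ m := by
    have h1 : Tendsto (fun c : ℝ => (c * β) ^ m) atTop atTop :=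
      (tendsto_rpow_atTop hP.hm).comp (tendsto_id.atTop_mul_const hβ)
    obtain ⟨c, h2, h3⟩ := ((h1.eventually_gt_atTop ((p - 1) * (β + 1))).and
      (eventually_gt_atTop 0)).exists
    exact ⟨c, h3, h2⟩
  refine ⟨c * 2 ^ β, by positivity, fun x hx hxR => ?_⟩
  set τ := ‖x‖ / 2 with hτ
  have hτ0 : 0 < τ := by positivity
  obtain ⟨M, hM⟩ := hu.exists_bound hτ0
  have htop : Tendsto (fun t : ℝ => c * (t - τ) ^ (-β) + A) (𝓝[>] τ) atTop := by
    have h1 : Tendsto (fun t : ℝ => t - τ) (𝓝[>] τ) (𝓝[>] 0) := by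
      refine tendsto_nhdsWithin_iff.2 ⟨?_, eventually_nhdsWithin_of_forall fun t ht => ?_⟩
      · have : Continuous fun t : ℝ => t - τ := by fun_prop
        simpa using (this.tendsto τ).mono_left nhdsWithin_le_nhds
      · simpa using ht
    exact tendsto_atTop_add_const_right _ _
      (((tendsto_rpow_neg_nhdsGT_zero (by linarith)).comp h1).const_mul_atTop hc0)
  obtain ⟨a, ha1, ha2, ha3⟩ := ((htop.eventually_ge_atTop M).and
    ((eventually_nhdsWithin_of_eventually_nhds
      (eventually_lt_nhds (show τ < ‖x‖ by rw [hτ]; linarith))).and self_mem_nhdsWithin)).exists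
  have ha3' : τ < a := ha3
  have key := radial_comparison (σ := 1) (γ := m + 1) (c := τ) (w := u) (a := a) (b := R)
    (f := fun t => c * (t - τ) ^ (-β) + A)
    (f₁ := fun t => c * (-β) * (t - τ) ^ (-β - 1))
    (f₂ := fun t => c * (-β) * (-β - 1) * (t - τ) ^ (-β - 1 - 1))
    hP.hp (hτ0.trans ha3') (hu.solAt_annulus (hτ0.trans ha3') le_rfl) ha3' ?_ ?_ ?_ ?_ ?_ ?_ x
    ha2.le hxR
  · have e : (‖x‖ - τ) ^ (-β) = 2 ^ β * ‖x‖ ^ (-β) := by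
      rw [show ‖x‖ - τ = ‖x‖ / 2 by rw [hτ]; ring, Real.div_rpow hx.le (by norm_num),
        Real.rpow_neg zero_le_two]
      field_simp
    simp only [e] at key
    linarith
  · intro t ht
    have h1 := hasDerivAt_const_mul_rpow c (-β) (sub_pos.2 ht)
    exact (HasDerivAt.comp_sub_const t τ h1).add_const A
  · intro t ht
    have h1 := hasDerivAt_const_mul_rpow (c * -β) (-β - 1) (sub_pos.2 ht)
    exact HasDerivAt.comp_sub_const t τ h1
  · intro t ht _
    have : 0 < t - τ := by linarith
    have : 0 < c * β * (t - τ) ^ (-β - 1) := by positivity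
    linarith
  · intro t ht _
    have ht1 : 0 < t - τ := by linarith
    have ht0 : 0 < t := by linarith
    set y := t - τ with hy
    have e1 : c * (-β) * y ^ (-β - 1) = -(c * β * y ^ (-β - 1)) := by ring
    have h2 : 0 < c * β * y ^ (-β - 1) := by positivity
    have e2 : (c * β * y ^ (-β - 1)) ^ (m + 1) = (c * β) ^ m * (c * β) * y ^ (-β - 1 - 1) := by
      rw [Real.mul_rpow (by positivity) (by positivity), Real.rpow_add_one (by positivity),
        ← Real.rpow_mul ht1.le]
      congr 2
      linarith [hP.hβ]
    rw [e1, abs_neg, abs_of_pos h2, e2, one_mul]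
    have hN : (0 : ℝ) ≤ N - 1 := by rw [← hP.hs]; nlinarith [hP.hs1, hP.hp]
    have h3 : ((N : ℝ) - 1) * (-(c * β * y ^ (-β - 1)) / t) ≤ 0 :=
      mul_nonpos_of_nonneg_of_nonpos hN (div_nonpos_of_nonpos_of_nonneg (by linarith) ht0.le)
    have h4 : 0 < c * β * y ^ (-β - 1 - 1) := by positivity
    nlinarith [mul_lt_mul_of_pos_right hc h4]
  · intro y hy
    exact (hM y (by rw [hy]; exact ha3'.le) (by rw [hy]; exact ha2.le.trans hxR)).trans ha1
  · intro y hy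
    have : 0 < R - τ := by linarith
    have : 0 < c * (R - τ) ^ (-β) := by positivity
    linarith [hu.bdry y hy]

/-- The sharp upper bound. -/
lemma PuncturedSol.le_sharp (hu : PuncturedSol p m R A u) (hP : Subcritical N p m s β b)
    {l : ℝ} (hl0 : 0 < l) (hl : b < (l * β) ^ m) :
    ∀ x : Euc N, 0 < ‖x‖ → ‖x‖ ≤ R → u x ≤ l * ‖x‖ ^ (-β) + A := by
  intro x hx hxR
  have hβ := hP.beta_pos
  obtain ⟨C, hC0, hC⟩ := hu.exists_rough hP
  obtain ⟨β', hβ', hb'⟩ : ∃ β', β < β' ∧ (p - 1) * (β' + 1) - (N - 1) < (l * β) ^ m := by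
    have h1 : Tendsto (fun β' : ℝ => (p - 1) * (β' + 1) - (N - 1)) (𝓝[>] β) (𝓝 b) := by
      have : Continuous fun β' : ℝ => (p - 1) * (β' + 1) - (N - 1) := by fun_prop
      rw [hP.hb]
      exact (this.tendsto β).mono_left nhdsWithin_le_nhds
    obtain ⟨β', h2, h3⟩ := ((h1.eventually_lt_const hl).and self_mem_nhdsWithin).exists
    exact ⟨β', h3, h2⟩
  have hβ'0 : 0 < β' := hβ.trans hβ'
  suffices h : ∀ ε : ℝ, 0 < ε → u x ≤ l * ‖x‖ ^ (-β) + ε * ‖x‖ ^ (-β') + A by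
    have h4 : Tendsto (fun ε : ℝ => l * ‖x‖ ^ (-β) + ε * ‖x‖ ^ (-β') + A) (𝓝[>] 0)
        (𝓝 (l * ‖x‖ ^ (-β) + A)) := by
      have : Continuous fun ε : ℝ => l * ‖x‖ ^ (-β) + ε * ‖x‖ ^ (-β') + A := by fun_prop
      simpa using (this.tendsto 0).mono_left nhdsWithin_le_nhds
    exact ge_of_tendsto h4 (eventually_nhdsWithin_of_forall h)
  intro ε hε
  obtain ⟨a, ha0, hax, ha⟩ : ∃ a, 0 < a ∧ a < ‖x‖ ∧ C * a ^ (-β) ≤ ε * a ^ (-β') := by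
    have h1 : Tendsto (fun a : ℝ => ε * a ^ (-(β' - β))) (𝓝[>] 0) atTop :=
      (tendsto_rpow_neg_nhdsGT_zero (by linarith)).const_mul_atTop hε
    obtain ⟨a, h2, h3, h4⟩ := ((h1.eventually_ge_atTop C).and
      ((eventually_nhdsWithin_of_eventually_nhds (eventually_lt_nhds hx)).and
        self_mem_nhdsWithin)).exists
    have h4' : 0 < a := h4
    refine ⟨a, h4', h3, ?_⟩
    have e : a ^ (-β') = a ^ (-(β' - β)) * a ^ (-β) := by
      rw [← Real.rpow_add h4']; ring_nf
    rw [e, ← mul_assoc]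
    exact mul_le_mul_of_nonneg_right h2 (by positivity)
  have key := radial_comparison (σ := 1) (γ := m + 1) (c := 0) (w := u) (a := a) (b := R)
    (f := fun t => l * t ^ (-β) + ε * t ^ (-β') + A)
    (f₁ := fun t => l * (-β) * t ^ (-β - 1) + ε * (-β') * t ^ (-β' - 1))
    (f₂ := fun t => l * (-β) * (-β - 1) * t ^ (-β - 1 - 1)
      + ε * (-β') * (-β' - 1) * t ^ (-β' - 1 - 1))
    hP.hp ha0 (hu.solAt_annulus ha0 le_rfl) ha0 ?_ ?_ ?_ ?_ ?_ ?_ x hax.le hxR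
  · exact key
  · intro t ht
    exact ((hasDerivAt_const_mul_rpow l (-β) ht).add
      (hasDerivAt_const_mul_rpow ε (-β') ht)).add_const A
  · intro t ht
    exact (hasDerivAt_const_mul_rpow _ (-β - 1) ht).add (hasDerivAt_const_mul_rpow _ (-β' - 1) ht)
  · intro t ht _
    have : 0 < t := ha0.trans ht
    have h1 : 0 < l * β * t ^ (-β - 1) := by positivity
    have h2 : 0 < ε * β' * t ^ (-β' - 1) := by positivity
    linarith
  · intro t ht _
    have ht0 : 0 < t := ha0.trans ht
    have h1 : 0 < l * β * t ^ (-β - 1) := by positivity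
    have h2 : 0 < ε * β' * t ^ (-β' - 1) := by positivity
    set X := l * β * t ^ (-β - 1) with hX
    set Y := ε * β' * t ^ (-β' - 1) with hY
    have e1 : l * (-β) * t ^ (-β - 1) + ε * (-β') * t ^ (-β' - 1) = -(X + Y) := by
      rw [hX, hY]; ring
    have e2 : l * (-β) * (-β - 1) * t ^ (-β - 1 - 1) + ε * (-β') * (-β' - 1) * t ^ (-β' - 1 - 1) =
        ((β + 1) * X + (β' + 1) * Y) / t := by
      rw [hX, hY, Real.rpow_sub_one ht0.ne' (-β - 1), Real.rpow_sub_one ht0.ne' (-β' - 1)]; ring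
    have e3 : (l * β) ^ m / t ≤ (X + Y) ^ m := by
      have h3 : X ^ m ≤ (X + Y) ^ m := Real.rpow_le_rpow h1.le (by linarith) hP.hm.le
      refine le_trans (le_of_eq ?_) h3
      rw [hX, Real.mul_rpow (x := l * β) (y := t ^ (-β - 1)) (by positivity) (by positivity),
        ← Real.rpow_mul ht0.le, show (-β - 1) * m = -1 by linarith [hP.hβ], Real.rpow_neg_one,
        div_eq_mul_inv]
    rw [e1, e2, abs_neg, abs_of_pos (by linarith), one_mul, Real.rpow_add_one (by linarith)]
    have h4 : ((N : ℝ) - 1) * (-(X + Y) / t) + (p - 1) * (((β + 1) * X + (β' + 1) * Y) / t) ≤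
        ((p - 1) * (β' + 1) - (N - 1)) / t * (X + Y) := by
      have h5 : (p - 1) * ((β + 1) * X + (β' + 1) * Y) ≤ (p - 1) * (β' + 1) * (X + Y) := by
        rw [mul_assoc (p - 1)]
        exact mul_le_mul_of_nonneg_left (by nlinarith) (by linarith [hP.hp])
      calc _ = ((p - 1) * ((β + 1) * X + (β' + 1) * Y) - (N - 1) * (X + Y)) / t := by ring
        _ ≤ ((p - 1) * (β' + 1) * (X + Y) - (N - 1) * (X + Y)) / t := by gcongr
        _ = _ := by ring
    refine h4.trans_lt (mul_lt_mul_of_pos_right ?_ (by linarith))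
    exact (div_lt_div_of_pos_right hb' ht0).trans_le e3
  · intro y hy
    have h1 := hC y (by rw [hy]; exact ha0) (by rw [hy]; exact hax.le.trans hxR)
    have : 0 < l * a ^ (-β) := by positivity
    rw [hy] at h1
    linarith
  · intro y hy
    have hR := hu.hR
    have h1 : 0 < l * R ^ (-β) := by positivity
    have h2 : 0 < ε * R ^ (-β') := by positivity
    linarith [hu.bdry y hy]

end Barriers

section LowerBarrier
variable {p m s β b R A : ℝ} {u : Euc N → ℝ}

/-- The sharp lower bound for solutions which dominate every multiple of the fundamental solution
on arbitrarily small spheres. -/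
lemma PuncturedSol.ge_sharp (hu : PuncturedSol p m R A u) (hP : Subcritical N p m s β b)
    (H : ∀ K r₀ : ℝ, 0 < r₀ → ∃ r, 0 < r ∧ r < r₀ ∧ ∀ x : Euc N, ‖x‖ = r →
      K * radialFund s r ≤ u x)
    {b₂ : ℝ} (hb0 : 0 < b₂) (hb : b₂ < b) :
    ∀ x : Euc N, 0 < ‖x‖ → ‖x‖ ≤ R →
      b₂ ^ (β + 1) * β⁻¹ * (‖x‖ ^ (-β) - R ^ (-β)) ≤ u x := by
  intro x hx hxR
  have hβ := hP.beta_pos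
  have hm := hP.hm
  have hs := hP.hs1
  have hR := hu.hR
  obtain ⟨b₁, hb1, hb2⟩ := exists_between hb
  have hb10 : 0 < b₁ := hb0.trans hb1
  have hinv : 0 < 1 / b₂ - 1 / b₁ := sub_pos.2 (one_div_lt_one_div_of_lt hb0 hb1)
  set C := (1 / b₂ - 1 / b₁) * ‖x‖ ^ (1 - s * m) with hC
  have hC0 : 0 < C := by positivity
  set D : ℝ → ℝ := fun t => C * t ^ (s * m) + 1 / b₁ * t with hD
  set D₁ : ℝ → ℝ := fun t => C * (s * m) * t ^ (s * m - 1) + 1 / b₁ with hD₁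
  set g : ℝ → ℝ := fun t => D t ^ (-(β + 1)) with hg
  have hDpos : ∀ t, 0 < t → 0 < D t := fun t ht => by simp only [hD]; positivity
  have hDd : ∀ t, 0 < t → HasDerivAt D (D₁ t) t := fun t ht =>
    (hasDerivAt_const_mul_rpow C (s * m) ht).add
      (((hasDerivAt_id t).const_mul (1 / b₁)).congr_deriv (mul_one _))
  have hgd : ∀ t, 0 < t → HasDerivAt g (D₁ t * (-(β + 1)) * D t ^ (-(β + 1) - 1)) t :=
    fun t ht => (hDd t ht).rpow_const (Or.inl (hDpos t ht).ne')
  have hgpos : ∀ t, 0 < t → 0 < g t := fun t ht => Real.rpow_pos_of_pos (hDpos t ht) _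
  have hgc : ContinuousOn g (Ioi 0) := fun t ht => (hgd t ht).continuousAt.continuousWithinAt
  set F : ℝ → ℝ := fun t => ∫ τ in R..t, g τ with hF
  have hFd : ∀ t, 0 < t → HasDerivAt F (g t) t := fun t ht => by
    have hsub : uIcc R t ⊆ Ioi 0 := fun τ hτ => (lt_min hR ht).trans_le hτ.1
    exact intervalIntegral.integral_hasDerivAt_right (hgc.mono hsub).intervalIntegrable
      (hgc.stronglyMeasurableAtFilter isOpen_Ioi t ht) (hgd t ht).continuousAt
  have hFR : F R = 0 := intervalIntegral.integral_same
  set K := C ^ (-(β + 1)) with hK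
  have hK0 : 0 < K := by positivity
  have hupper : ∀ t, 0 < t → t ≤ R → -(K * radialFund s t) ≤ F t := by
    intro t ht htR
    have hanti : AntitoneOn (fun τ => F τ + K * radialFund s τ) (Icc t R) := by
      have hd : ∀ τ, 0 < τ → HasDerivAt (fun τ => F τ + K * radialFund s τ)
          (g τ + K * (-τ ^ (-s))) τ := fun τ hτ =>
        (hFd τ hτ).add ((hasDerivAt_radialFund hs hτ).const_mul K)
      refine antitoneOn_of_deriv_nonpos (convex_Icc t R)
        (fun τ hτ => (hd τ (ht.trans_le hτ.1)).continuousAt.continuousWithinAt)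
        (fun τ hτ => (hd τ (ht.trans_le (interior_subset hτ).1)).differentiableAt
          |>.differentiableWithinAt)
        fun τ hτ => ?_
      have hτ0 : 0 < τ := ht.trans_le (interior_subset hτ).1
      rw [(hd τ hτ0).deriv]
      have h1 : g τ ≤ (C * τ ^ (s * m)) ^ (-(β + 1)) := by
        refine Real.rpow_le_rpow_of_nonpos (by positivity) ?_ (by linarith)
        simp only [hD]
        have : 0 < 1 / b₁ * τ := by positivity
        linarith
      rw [Real.mul_rpow (by positivity) (by positivity), ← Real.rpow_mul hτ0.le,
        show s * m * -(β + 1) = -s by linear_combination -s * hP.hβ] at h1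
      linarith
    have := hanti ⟨le_rfl, htR⟩ ⟨htR, le_rfl⟩ htR
    simp only [hFR] at this
    have h2 := mul_nonneg hK0.le (radialFund_nonneg (s := s) hR hu.hR1)
    linarith
  have hlower : b₂ ^ (β + 1) * β⁻¹ * (‖x‖ ^ (-β) - R ^ (-β)) ≤ -F ‖x‖ := by
    have hmono : MonotoneOn (fun τ => F τ + b₂ ^ (β + 1) * β⁻¹ * τ ^ (-β)) (Icc ‖x‖ R) := by
      have hd : ∀ τ, 0 < τ → HasDerivAt (fun τ => F τ + b₂ ^ (β + 1) * β⁻¹ * τ ^ (-β))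
          (g τ + b₂ ^ (β + 1) * β⁻¹ * (-β) * τ ^ (-β - 1)) τ := fun τ hτ =>
        (hFd τ hτ).add (hasDerivAt_const_mul_rpow _ _ hτ)
      refine monotoneOn_of_deriv_nonneg (convex_Icc _ R)
        (fun τ hτ => (hd τ (hx.trans_le hτ.1)).continuousAt.continuousWithinAt)
        (fun τ hτ => (hd τ (hx.trans_le (interior_subset hτ).1)).differentiableAt
          |>.differentiableWithinAt)
        fun τ hτ => ?_
      have hxτ := (interior_subset hτ).1
      have hτ0 : 0 < τ := hx.trans_le hxτ
      rw [(hd τ hτ0).deriv]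
      have h1 : D τ ≤ b₂⁻¹ * τ := by
        have h2 : C * τ ^ (s * m) ≤ (1 / b₂ - 1 / b₁) * τ := by
          have h3 : ‖x‖ ^ (1 - s * m) ≤ τ ^ (1 - s * m) :=
            Real.rpow_le_rpow hx.le hxτ (by linarith [hP.hsm])
          calc C * τ ^ (s * m) ≤ (1 / b₂ - 1 / b₁) * τ ^ (1 - s * m) * τ ^ (s * m) := by
                rw [hC]; gcongr
            _ = (1 / b₂ - 1 / b₁) * τ := by
                rw [mul_assoc, ← Real.rpow_add hτ0, sub_add_cancel, Real.rpow_one]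
        simp only [hD]
        rw [← one_div]
        linarith
      have h4 : (b₂⁻¹ * τ) ^ (-(β + 1)) ≤ g τ :=
        Real.rpow_le_rpow_of_nonpos (hDpos τ hτ0) h1 (by linarith)
      rw [Real.mul_rpow (by positivity) hτ0.le, Real.inv_rpow hb0.le, Real.rpow_neg hb0.le,
        inv_inv, neg_add'] at h4
      have h5 : b₂ ^ (β + 1) * β⁻¹ * (-β) * τ ^ (-β - 1) = -(b₂ ^ (β + 1) * τ ^ (-β - 1)) := by
        field_simp
      rw [h5]
      linarith
    have := hmono ⟨le_rfl, hxR⟩ ⟨hxR, le_rfl⟩ hxR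
    simp only [hFR] at this
    linarith
  obtain ⟨r, hr0, hrx, hr⟩ := H K ‖x‖ hx
  have key := radial_comparison (σ := -1) (γ := m + 1) (c := 0) (w := fun y => -u y) (a := r)
    (b := R) (f := F) (f₁ := g) (f₂ := fun t => D₁ t * (-(β + 1)) * D t ^ (-(β + 1) - 1))
    hP.hp hr0 (fun y hy => (hu.solAt_annulus hr0 le_rfl y hy).neg) hr0 hFd hgd
    (fun t ht _ => (hgpos t (hr0.trans ht)).ne') ?_ ?_ ?_ x hrx.le hxR
  · linarith
  · intro t ht _
    have ht0 : 0 < t := hr0.trans ht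
    have hDt := hDpos t ht0
    have e1 : g t ^ (m + 1) = g t / D t := by
      simp only [hg]
      rw [← Real.rpow_mul hDt.le, ← Real.rpow_sub_one hDt.ne']
      congr 1
      linear_combination -hP.hβ
    have e2 : D t ^ (-(β + 1) - 1) = g t / D t := Real.rpow_sub_one hDt.ne' _
    rw [abs_of_pos (hgpos t ht0), e1, e2]
    have e3 : D₁ t = s * m * (D t / t) + (1 - s * m) / b₁ := by
      simp only [hD₁, hD]
      rw [Real.rpow_sub_one ht0.ne']
      field_simp
      ring
    have e4 : ((N : ℝ) - 1) * (g t / t) + (p - 1) * (D₁ t * (-(β + 1)) * (g t / D t)) -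
        -1 * (g t / D t) = g t / D t * (1 - b / b₁) := by
      have hN : (N : ℝ) - 1 = s * (p - 1) := hP.hs.symm
      have e5 : D₁ t * (β + 1) = s * (D t / t) + (β + 1 - s) / b₁ := by
        rw [e3]
        linear_combination (s * (D t / t) - s / b₁) * hP.hβ
      have e6 : b = (p - 1) * (β + 1 - s) := by rw [hP.hb, hN]; ring
      rw [show D₁ t * (-(β + 1)) = -(D₁ t * (β + 1)) by ring, e5, e6, hN]
      field_simp
      ring
    have h1 : 1 - b / b₁ < 0 := by
      have := (one_lt_div hb10).2 hb2
      linarith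
    have h2 := mul_neg_of_pos_of_neg (div_pos (hgpos t ht0) hDt) h1
    linarith
  · intro y hy
    have := hupper r hr0 (hrx.le.trans hxR)
    linarith [hr y hy]
  · intro y hy
    rw [hFR]
    linarith [hu.nonneg y (by rw [hy]; exact hR) hy.le]

lemma PuncturedSol.eventually_small (hu : PuncturedSol p m R A u) :
    ∀ᶠ x : Euc N in 𝓝[≠] 0, 0 < ‖x‖ ∧ ‖x‖ ≤ R := by
  filter_upwards [self_mem_nhdsWithin,
    nhdsWithin_le_nhds (closedBall_mem_nhds (0 : Euc N) hu.hR)] with x hx hxR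
  exact ⟨norm_pos_iff.2 hx, by simpa using hxR⟩

/-- Convergence to the explicit self-similar singularity. -/
lemma PuncturedSol.tendsto_strong (hu : PuncturedSol p m R A u) (hP : Subcritical N p m s β b)
    (H : ∀ K r₀ : ℝ, 0 < r₀ → ∃ r, 0 < r ∧ r < r₀ ∧ ∀ x : Euc N, ‖x‖ = r →
      K * radialFund s r ≤ u x) :
    Tendsto (fun x : Euc N => ‖x‖ ^ β * u x) (𝓝[≠] 0) (𝓝 (β⁻¹ * b ^ (1 / m))) := by
  have hβ := hP.beta_pos
  have hb := hP.b_pos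
  have hR := hu.hR
  rw [hP.one_div_m]
  have hnorm : Tendsto (fun x : Euc N => ‖x‖ ^ β) (𝓝[≠] 0) (𝓝 0) := by
    have h1 : Tendsto (fun x : Euc N => ‖x‖) (𝓝[≠] 0) (𝓝 0) := by
      simpa using (continuous_norm.tendsto (0 : Euc N)).mono_left nhdsWithin_le_nhds
    simpa [Real.zero_rpow hβ.ne'] using h1.rpow_const (Or.inr hβ.le)
  have hsmall := hu.eventually_small
  refine tendsto_order.2 ⟨fun a ha => ?_, fun a ha => ?_⟩
  · obtain ⟨b₂, hb20, hb2, hab⟩ : ∃ b₂, 0 < b₂ ∧ b₂ < b ∧ a < b₂ ^ (β + 1) * β⁻¹ := by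
      have h1 : Tendsto (fun b₂ : ℝ => b₂ ^ (β + 1) * β⁻¹) (𝓝[<] b) (𝓝 (β⁻¹ * b ^ (β + 1))) := by
        rw [mul_comm]
        exact ((tendsto_id.mono_left nhdsWithin_le_nhds).rpow_const (Or.inl hb.ne')).mul_const _
      obtain ⟨b₂, h2, h3, h4⟩ := ((h1.eventually_const_lt ha).and
        ((eventually_nhdsWithin_of_eventually_nhds (eventually_gt_nhds hb)).and
          self_mem_nhdsWithin)).exists
      exact ⟨b₂, h3, h4, h2⟩
    have h2 : Tendsto (fun x : Euc N => b₂ ^ (β + 1) * β⁻¹ * (1 - ‖x‖ ^ β * R ^ (-β))) (𝓝[≠] 0)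
        (𝓝 (b₂ ^ (β + 1) * β⁻¹)) := by
      simpa using ((hnorm.mul_const (R ^ (-β))).const_sub 1).const_mul (b₂ ^ (β + 1) * β⁻¹)
    filter_upwards [h2.eventually_const_lt hab, hsmall] with x hx ⟨hx0, hxR⟩
    refine hx.trans_le ?_
    have h3 := mul_le_mul_of_nonneg_left (hu.ge_sharp hP H hb20 hb2 x hx0 hxR)
      (Real.rpow_nonneg hx0.le β)
    refine le_trans (le_of_eq ?_) h3
    have : ‖x‖ ^ β * ‖x‖ ^ (-β) = 1 := by
      rw [← Real.rpow_add hx0, add_neg_cancel, Real.rpow_zero]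
    linear_combination -(b₂ ^ (β + 1) * β⁻¹) * this
  · obtain ⟨l, hl, hla⟩ := exists_between ha
    have hl0 : 0 < l := lt_of_le_of_lt (by positivity) hl
    have hlb : b < (l * β) ^ m := by
      have h1 : b ^ (β + 1) < l * β := by
        rwa [inv_mul_lt_iff₀ hβ, mul_comm] at hl
      have h2 := Real.rpow_lt_rpow (by positivity) h1 hP.hm
      rwa [← Real.rpow_mul hb.le, hP.hβ, Real.rpow_one] at h2
    have h2 : Tendsto (fun x : Euc N => l + ‖x‖ ^ β * A) (𝓝[≠] 0) (𝓝 l) := by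
      simpa using (hnorm.mul_const A).const_add l
    filter_upwards [h2.eventually_lt_const hla, hsmall] with x hx ⟨hx0, hxR⟩
    refine lt_of_le_of_lt ?_ hx
    have h3 := mul_le_mul_of_nonneg_left (hu.le_sharp hP hl0 hlb x hx0 hxR)
      (Real.rpow_nonneg hx0.le β)
    refine h3.trans (le_of_eq ?_)
    have : ‖x‖ ^ β * ‖x‖ ^ (-β) = 1 := by
      rw [← Real.rpow_add hx0, add_neg_cancel, Real.rpow_zero]
    linear_combination l * this

end LowerBarrier

lemma radialFund_anti {s t t' : ℝ} (ht : 0 < t) (htt : t ≤ t') :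
    radialFund s t' ≤ radialFund s t := by
  rw [radialFund, radialFund]
  split_ifs with h
  · have h1 : 0 < s - 1 := by linarith
    exact div_le_div_of_nonneg_right
      (Real.rpow_le_rpow_of_nonpos ht htt (by linarith)) h1.le
  · exact neg_le_neg (Real.log_le_log ht htt)

lemma radialFund_mul_le {s r t : ℝ} (hs : 1 ≤ s) (hr : 0 < r) (ht : 1 ≤ t) :
    radialFund s (r * t) ≤ radialFund s r * t ^ (1 - s) := by
  have ht0 : 0 < t := by linarith
  rw [radialFund, radialFund]
  split_ifs with h
  · rw [Real.mul_rpow hr.le ht0.le]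
    exact le_of_eq (by ring)
  · obtain rfl : s = 1 := by linarith
    rw [Real.log_mul hr.ne' ht0.ne', sub_self, Real.rpow_zero]
    linarith [Real.log_nonneg ht]

lemma le_radialFund_two_mul {s r : ℝ} (hs : 1 ≤ s) (hr : 0 < r) :
    radialFund s r * 2 ^ (1 - s) ≤ radialFund s (r * 2) + Real.log 2 := by
  have hl : 0 ≤ Real.log 2 := Real.log_nonneg one_le_two
  rw [radialFund, radialFund]
  split_ifs with h
  · rw [Real.mul_rpow hr.le zero_le_two]
    have : r ^ (1 - s) / (s - 1) * 2 ^ (1 - s) = r ^ (1 - s) * 2 ^ (1 - s) / (s - 1) := by ring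
    linarith
  · obtain rfl : s = 1 := by linarith
    rw [Real.log_mul hr.ne' two_ne_zero, sub_self, Real.rpow_zero]
    linarith

lemma tendsto_rpow_mul_radialFund {s β : ℝ} (hβ : 0 < β) (hsβ : s - 1 < β) :
    Tendsto (fun t => t ^ β * radialFund s t) (𝓝[>] 0) (𝓝 0) := by
  by_cases h : 1 < s
  · have h1 : Tendsto (fun t : ℝ => t ^ (β + 1 - s) / (s - 1)) (𝓝[>] 0) (𝓝 0) := by
      have h2 : Tendsto (fun t : ℝ => t ^ (β + 1 - s)) (𝓝[>] 0) (𝓝 0) := by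
        have := ((tendsto_id (α := ℝ)).mono_left
          (nhdsWithin_le_nhds (a := 0) (s := Ioi 0))).rpow_const (p := β + 1 - s) (Or.inr (by linarith))
        simpa [Real.zero_rpow (show β + 1 - s ≠ 0 by linarith)] using this
      simpa using h2.div_const (s - 1)
    refine h1.congr' (eventually_nhdsWithin_of_forall fun t ht => ?_)
    simp only [radialFund, if_pos h]
    rw [mul_div_assoc', ← Real.rpow_add ht]
    ring_nf
  · have h1 := (tendsto_log_mul_rpow_nhdsGT_zero hβ).neg
    rw [neg_zero] at h1
    refine h1.congr fun t => ?_
    rw [radialFund, if_neg h]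
    ring

section Dichotomy
variable {p m s β b R A : ℝ} {u : Euc N → ℝ}

lemma PuncturedSol.exists_rough_mul (hu : PuncturedSol p m R A u) (hP : Subcritical N p m s β b) :
    ∃ C > 0, ∀ x : Euc N, 0 < ‖x‖ → ‖x‖ ≤ R → u x ≤ C * ‖x‖ ^ (-β) := by
  obtain ⟨C, hC0, hC⟩ := hu.exists_rough hP
  have hA := hu.hA
  refine ⟨C + A, by linarith, fun x hx hxR => (hC x hx hxR).trans ?_⟩
  have h1 : 1 ≤ ‖x‖ ^ (-β) :=
    Real.one_le_rpow_of_pos_of_le_one_of_nonpos hx (hxR.trans hu.hR1) (by linarith [hP.beta_pos])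
  nlinarith

lemma Subcritical.scale_le (hP : Subcritical N p m s β b) {T C r : ℝ} (hT : 0 ≤ T) (hC : 0 ≤ C)
    (hr : 0 < r) (h : T ≤ C * r ^ (-β)) : T ^ (m + 1 - 1) * r ^ (2 - (m + 1)) ≤ C ^ m := by
  have h1 : T ^ m ≤ C ^ m * r ^ (-β * m) := by
    rw [Real.rpow_mul hr.le, ← Real.mul_rpow hC (by positivity)]
    exact Real.rpow_le_rpow hT h hP.hm.le
  calc T ^ (m + 1 - 1) * r ^ (2 - (m + 1)) ≤ C ^ m * r ^ (-β * m) * r ^ (1 - m) := by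
        rw [add_sub_cancel_right, show 2 - (m + 1) = 1 - m by ring]
        gcongr
    _ = C ^ m := by
        rw [mul_assoc, ← Real.rpow_add hr, show -β * m + (1 - m) = 0 by linarith [hP.hβ],
          Real.rpow_zero, mul_one]

lemma PuncturedSol.exists_max_sphere (hN : 2 ≤ N) (hu : PuncturedSol p m R A u) {r : ℝ}
    (hr : 0 < r) (hrR : r ≤ R) : ∃ x : Euc N, ‖x‖ = r ∧ ∀ y : Euc N, ‖y‖ = r → u y ≤ u x := by
  have hne : (sphere (0 : Euc N) r).Nonempty := by
    refine ⟨EuclideanSpace.single (⟨0, by omega⟩ : Fin N) r, ?_⟩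
    simp [hr.le]
  have hc : ContinuousOn u (sphere (0 : Euc N) r) := fun x hx => by
    rw [mem_sphere_zero_iff_norm] at hx
    have h := hu.sol x (by rw [hx]; exact hr) (by rw [hx]; exact hrR)
    exact h.1.continuousAt.continuousWithinAt
  obtain ⟨x, hx, hmax⟩ := (isCompact_sphere (0 : Euc N) r).exists_isMaxOn hne hc
  exact ⟨x, by simpa using hx, fun y hy => hmax (by simpa using hy)⟩

/-- The rescaled solution `y ↦ u (r y) / T` on the annulus `1 ≤ |y| ≤ 3`. -/
lemma PuncturedSol.solAt_scale (hu : PuncturedSol p m R A u) {r T : ℝ} (hr : 0 < r)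
    (hrR : r * 3 ≤ R) (hT : 0 < T) : ∀ y ∈ annulus (0 : Euc N) 1 3,
      SolAt p (m + 1) (T ^ (m + 1 - 1) * r ^ (2 - (m + 1))) (fun y => T⁻¹ * u (r • y)) y := by
  intro y hy
  have h1 := hy.1
  have h2 := hy.2
  rw [sub_zero] at h1 h2
  refine SolAt.scale hr hT (hu.sol _ ?_ ?_)
  · rw [norm_smul, Real.norm_of_nonneg hr.le]
    have : 0 < ‖y‖ := by linarith
    positivity
  · rw [norm_smul, Real.norm_of_nonneg hr.le]
    nlinarith

/-- If `u` is not controlled by the fundamental solution, then it dominates each of its multiples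
on arbitrarily small spheres. -/
lemma PuncturedSol.dominates_of_unbounded (hN : 2 ≤ N) (hu : PuncturedSol p m R A u)
    (hP : Subcritical N p m s β b)
    (h : ∀ K > 0, ∀ᶠ r in 𝓝[>] (0 : ℝ), ∃ x : Euc N, ‖x‖ = r ∧ K * radialFund s r < u x)
    (K r₀ : ℝ) (hr₀ : 0 < r₀) :
    ∃ r, 0 < r ∧ r < r₀ ∧ ∀ x : Euc N, ‖x‖ = r → K * radialFund s r ≤ u x := by
  have hβ := hP.beta_pos
  obtain ⟨C, hC0, hC⟩ := hu.exists_rough_mul hP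
  have hmax : ∀ r, 0 < r ∧ r ≤ R → ∃ x : Euc N, ‖x‖ = r ∧ ∀ y : Euc N, ‖y‖ = r → u y ≤ u x :=
    fun r hr => hu.exists_max_sphere hN hr.1 hr.2
  choose! X hX hXmax using hmax
  set Q : ℝ := 2 * 2 ^ β with hQ
  have hQ0 : 0 < Q := by positivity
  obtain ⟨δ', hδ', hgap⟩ := gap_propagation (N := N) (κ := 0) (γ := m + 1) (E := C ^ m) (δ := Q⁻¹)
    hN hP.hp (by linarith [hP.hm]) (by linarith [hP.m_lt_one]) hP.hs hP.hs1 (by positivity) le_rfl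
    (by positivity)
  set L := max K 1 / δ' with hL
  have hL0 : 0 < L := by positivity
  have hev : ∀ᶠ r in 𝓝[>] (0 : ℝ), (∃ x : Euc N, ‖x‖ = r ∧ L * radialFund s r < u x) ∧
      A ≤ L * radialFund s r ∧ 0 < L * radialFund s r := by
    have h1 := (tendsto_radialFund s).const_mul_atTop hL0
    exact (h L hL0).and ((h1.eventually_ge_atTop A).and (h1.eventually_gt_atTop 0))
  obtain ⟨ρ, hρ0, hρ⟩ := mem_nhdsGT_iff_exists_Ioo_subset.1 hev
  have hρ0' : 0 < ρ := hρ0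
  have hR := hu.hR
  obtain ⟨ρ₁, hρ₁, hρ₁'⟩ := exists_between (lt_min (lt_min hρ0' hr₀) hR)
  have hρ₁ρ : ρ₁ < ρ := hρ₁'.trans_le ((min_le_left _ _).trans (min_le_left _ _))
  have hρ₁r : ρ₁ < r₀ := hρ₁'.trans_le ((min_le_left _ _).trans (min_le_right _ _))
  have hρ₁R : ρ₁ < R := hρ₁'.trans_le (min_le_right _ _)
  have hXL : ∀ r, 0 < r → r ≤ ρ₁ → L * radialFund s r < u (X r) := by
    intro r hr hr1
    obtain ⟨⟨x, hx, hx'⟩, -⟩ := hρ ⟨hr, hr1.trans_lt hρ₁ρ⟩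
    exact hx'.trans_le (hXmax r ⟨hr, by linarith⟩ x hx)
  have hXpos : ∀ r, 0 < r → r ≤ ρ₁ → A ≤ u (X r) ∧ 0 < u (X r) := by
    intro r hr hr1
    obtain ⟨-, h1, h2⟩ := hρ ⟨hr, hr1.trans_lt hρ₁ρ⟩
    have := hXL r hr hr1
    constructor <;> linarith
  obtain ⟨r, hr0, hr3, hdouble⟩ : ∃ r, 0 < r ∧ r * 3 ≤ ρ₁ ∧ u (X r) ≤ Q * u (X (r * 2)) := by
    by_contra! hcon
    have hind : ∀ n : ℕ, Q ^ n * u (X (ρ₁ / 2)) ≤ u (X (ρ₁ / 2 / 2 ^ n)) := by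
      intro n
      induction n with
      | zero => simp
      | succ n ih =>
        have h1 : 0 < ρ₁ / 2 / 2 ^ (n + 1) := by positivity
        have h2 : ρ₁ / 2 / 2 ^ (n + 1) * 2 = ρ₁ / 2 / 2 ^ n := by rw [pow_succ]; field_simp
        have h3 : ρ₁ / 2 / 2 ^ n ≤ ρ₁ / 2 := div_le_self (by positivity) (one_le_pow₀ one_le_two)
        have h4 := hcon _ h1 (by linarith)
        rw [h2] at h4
        calc Q ^ (n + 1) * u (X (ρ₁ / 2)) = Q * (Q ^ n * u (X (ρ₁ / 2))) := by ring
          _ ≤ Q * u (X (ρ₁ / 2 / 2 ^ n)) := by gcongr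
          _ ≤ _ := h4.le
    have hbd : ∀ n : ℕ, 2 ^ n * u (X (ρ₁ / 2)) ≤ C * (ρ₁ / 2) ^ (-β) := by
      intro n
      have h1 : 0 < ρ₁ / 2 / 2 ^ n := by positivity
      have h2 : ρ₁ / 2 / 2 ^ n ≤ ρ₁ / 2 := div_le_self (by positivity) (one_le_pow₀ one_le_two)
      have h3 := hX _ ⟨h1, by linarith⟩
      have h4 := (hind n).trans (hC _ (by rw [h3]; exact h1) (by rw [h3]; linarith))
      have h5 : ((2 : ℝ) ^ n) ^ (-β) = ((2 ^ β) ^ n)⁻¹ := by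
        rw [Real.rpow_neg (by positivity), ← Real.rpow_natCast, ← Real.rpow_natCast,
          ← Real.rpow_mul zero_le_two, ← Real.rpow_mul zero_le_two, mul_comm]
      rw [h3, Real.div_rpow (by positivity) (by positivity), h5, hQ, mul_pow, div_inv_eq_mul] at h4
      refine le_of_mul_le_mul_right ?_ (show (0 : ℝ) < (2 ^ β) ^ n by positivity)
      linarith
    have htop : Tendsto (fun n : ℕ => (2 : ℝ) ^ n * u (X (ρ₁ / 2))) atTop atTop :=
      (tendsto_pow_atTop_atTop_of_one_lt one_lt_two).atTop_mul_const
        (hXpos (ρ₁ / 2) (by positivity) (by linarith)).2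
    obtain ⟨n, hn⟩ := (htop.eventually_gt_atTop (C * (ρ₁ / 2) ^ (-β))).exists
    exact absurd (hbd n) (not_le.2 hn)
  have hT : 0 < u (X r) := (hXpos r hr0 (by linarith)).2
  have hle : ∀ x : Euc N, r ≤ ‖x‖ → ‖x‖ ≤ R → u x ≤ u (X r) :=
    hu.le_const hP hr0 le_rfl (fun x hx => hXmax r ⟨hr0, by linarith⟩ x hx)
      (fun x hx => (hu.bdry x hx).trans (hXpos r hr0 (by linarith)).1)
  have hmem : ∀ y ∈ annulus (0 : Euc N) 1 3, 0 ≤ (u (X r))⁻¹ * u (r • y) ∧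
      (u (X r))⁻¹ * u (r • y) ≤ 1 := by
    intro y hy
    have h1 := hy.1
    have h2 := hy.2
    rw [sub_zero] at h1 h2
    have h3 : ‖r • y‖ = r * ‖y‖ := by rw [norm_smul, Real.norm_of_nonneg hr0.le]
    have h4 : r ≤ ‖r • y‖ := by rw [h3]; nlinarith
    have h5 : ‖r • y‖ ≤ R := by rw [h3]; nlinarith
    have h6 := hu.nonneg _ (hr0.trans_le h4) h5
    refine ⟨by positivity, ?_⟩
    rw [inv_mul_le_iff₀ hT, mul_one]
    exact hle _ h4 h5
  have hXr : ‖X r‖ = r := hX r ⟨hr0, by linarith⟩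
  have hX2 : ‖X (r * 2)‖ = r * 2 := hX (r * 2) ⟨by linarith, by linarith⟩
  have key := hgap (fun y => -((u (X r))⁻¹ * u (r • y)))
    (-((u (X r)) ^ (m + 1 - 1) * r ^ (2 - (m + 1)))) 0 ?_ (Or.inl (zero_mul _)) ?_ ?_ ?_ ?_
  · refine ⟨r * 2, by linarith, by linarith, fun x hx => ?_⟩
    have h1 := key (r⁻¹ • x) (by
      rw [norm_smul, norm_inv, Real.norm_of_nonneg hr0.le, hx]; field_simp)
    rw [smul_inv_smul₀ hr0.ne', zero_mul, zero_add, zero_sub, neg_le_neg_iff,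
      le_inv_mul_iff₀ hT] at h1
    refine le_trans ?_ h1
    have h2 := hXL r hr0 (by linarith)
    have h3 : L * δ' = max K 1 := by rw [hL]; field_simp
    have h4 := radialFund_anti (s := s) hr0 (show r ≤ r * 2 by linarith)
    have h5 : 0 ≤ radialFund s (r * 2) := radialFund_nonneg (by linarith) (by linarith [hu.hR1])
    calc K * radialFund s (r * 2) ≤ max K 1 * radialFund s (r * 2) := by
          gcongr; exact le_max_left _ _
      _ ≤ max K 1 * radialFund s r := by gcongr
      _ = L * radialFund s r * δ' := by rw [← h3]; ring
      _ ≤ u (X r) * δ' := by gcongr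
  · rw [abs_neg, abs_of_nonneg (by positivity)]
    refine hP.scale_le hT.le hC0.le hr0 ?_
    have := hC (X r) (by rw [hXr]; exact hr0) (by rw [hXr]; linarith)
    rwa [hXr] at this
  · exact fun y hy => (hu.solAt_scale hr0 (by linarith) hT y hy).neg
  · intro y hy y' hy'
    linarith [(hmem y hy).1, (hmem y' hy').2]
  · intro y hy
    linarith [(hmem y hy).1]
  · refine ⟨r⁻¹ • X (r * 2), ?_, ?_⟩
    · rw [norm_smul, norm_inv, Real.norm_of_nonneg hr0.le, hX2]; field_simp
    · simp only [smul_inv_smul₀ hr0.ne']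
      have : Q⁻¹ ≤ (u (X r))⁻¹ * u (X (r * 2)) := by
        rw [le_inv_mul_iff₀ hT, ← div_eq_mul_inv, div_le_iff₀ hQ0]
        linarith
      linarith

end Dichotomy

section Classification
variable {p m s β b R A : ℝ} {u : Euc N → ℝ}

/-- If `u` falls below `k₁ < k` times the fundamental solution at points tending to the origin, then
it is controlled on small spheres by a smaller multiple than `k`. -/
lemma PuncturedSol.exists_smaller_multiple (hN : 2 ≤ N) (hu : PuncturedSol p m R A u)
    (hP : Subcritical N p m s β b) {k k₁ : ℝ} (hk₁ : 0 < k₁) (hk : k₁ < k)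
    (hle : ∀ x : Euc N, 0 < ‖x‖ → ‖x‖ ≤ R → u x ≤ k * radialFund s ‖x‖ + A)
    (hlow : ∃ᶠ x : Euc N in 𝓝[≠] 0, u x < k₁ * radialFund s ‖x‖) :
    ∃ k₂, 0 < k₂ ∧ k₂ < k ∧
      ∃ᶠ r in 𝓝[>] (0 : ℝ), ∀ x : Euc N, ‖x‖ = r → u x ≤ k₂ * radialFund s r := by
  have hk0 : 0 < k := hk₁.trans hk
  have hA := hu.hA
  have hs1 := hP.hs1
  set Λ := k + 1 with hΛ
  have hΛ0 : 0 < Λ := by positivity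
  have h2s : (0 : ℝ) < 2 ^ (1 - s) := by positivity
  obtain ⟨δ', hδ', hgap⟩ := gap_propagation (N := N) (κ := k / Λ) (γ := m + 1) (E := Λ ^ m)
    (δ := (k - k₁) / Λ * 2 ^ (1 - s)) hN hP.hp (by linarith [hP.hm]) (by linarith [hP.m_lt_one])
    hP.hs hs1 (by positivity) (by positivity)
    (mul_pos (div_pos (sub_pos.2 hk) hΛ0) h2s)
  refine ⟨max (k - δ' * Λ / 2) (k / 2), lt_max_of_lt_right (by linarith),
    max_lt (by nlinarith [mul_pos hδ' hΛ0]) (by linarith), ?_⟩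
  have hhalf : Tendsto (fun x : Euc N => ‖x‖ / 2) (𝓝[≠] 0) (𝓝[>] 0) := by
    refine tendsto_nhdsWithin_iff.2 ⟨?_, ?_⟩
    · have : Continuous fun x : Euc N => ‖x‖ / 2 := by fun_prop
      simpa using (this.tendsto 0).mono_left nhdsWithin_le_nhds
    · filter_upwards [hu.eventually_small] with x hx
      exact half_pos hx.1
  have hnorm : Tendsto (fun x : Euc N => ‖x‖) (𝓝[≠] 0) (𝓝[>] 0) := tendsto_norm_nhdsNE_zero
  have hev1 : ∀ᶠ x : Euc N in 𝓝[≠] 0, ‖x‖ / 2 * 3 ≤ R ∧ A < radialFund s (‖x‖ / 2) ∧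
      (‖x‖ / 2) ^ β * radialFund s (‖x‖ / 2) ≤ 1 := by
    refine hhalf.eventually (p := fun r => r * 3 ≤ R ∧ A < radialFund s r ∧
      r ^ β * radialFund s r ≤ 1) ?_
    refine (eventually_nhdsWithin_of_eventually_nhds ?_).and
      (((tendsto_radialFund s).eventually_gt_atTop A).and
        ((tendsto_rpow_mul_radialFund hP.beta_pos hP.lt_beta).eventually_le_const one_pos))
    have : Continuous fun r : ℝ => r * 3 := by fun_prop
    exact (this.tendsto 0).eventually_le_const (by simpa using hu.hR)
  have hev2 : ∀ᶠ x : Euc N in 𝓝[≠] 0,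
      k * Real.log 2 + A ≤ δ' * Λ / 2 * radialFund s ‖x‖ :=
    hnorm.eventually (((tendsto_radialFund s).const_mul_atTop
      (by positivity)).eventually_ge_atTop _)
  refine hnorm.frequently ((hlow.and_eventually
    (hu.eventually_small.and (hev1.and hev2))).mono ?_)
  rintro x₀ ⟨hx₀, ⟨hpos, hxR⟩, ⟨hr3, hAμ, hβμ⟩, hlarge⟩ x hx
  set r := ‖x₀‖ / 2 with hr
  have hr0 : 0 < r := half_pos hpos
  have hx₀r : ‖x₀‖ = r * 2 := by rw [hr]; ring
  set μ := radialFund s r with hμ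
  have hμ0 : 0 < μ := hA.trans_lt hAμ
  have hT : 0 < Λ * μ := by positivity
  have hbound : ∀ y ∈ annulus (0 : Euc N) 1 3, 0 ≤ (Λ * μ)⁻¹ * u (r • y) ∧
      (Λ * μ)⁻¹ * u (r • y) ≤ k / Λ * ‖y‖ ^ (1 - s) + A / (Λ * μ) := by
    intro y hy
    have h1 := hy.1
    have h2 := hy.2
    rw [sub_zero] at h1 h2
    have h3 : ‖r • y‖ = r * ‖y‖ := by rw [norm_smul, Real.norm_of_nonneg hr0.le]
    have h4 : 0 < ‖r • y‖ := by rw [h3]; nlinarith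
    have h5 : ‖r • y‖ ≤ R := by rw [h3]; nlinarith
    have h6 := hu.nonneg _ h4 h5
    refine ⟨by positivity, ?_⟩
    have h7 := hle _ h4 h5
    rw [h3] at h7
    have h8 := mul_le_mul_of_nonneg_left (radialFund_mul_le hs1 hr0 h1) hk0.le
    rw [inv_mul_le_iff₀ hT]
    have h9 : Λ * μ * (k / Λ * ‖y‖ ^ (1 - s) + A / (Λ * μ)) = k * (μ * ‖y‖ ^ (1 - s)) + A := by
      field_simp
    rw [h9]
    linarith
  have key := hgap (fun y => (Λ * μ)⁻¹ * u (r • y))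
    ((Λ * μ) ^ (m + 1 - 1) * r ^ (2 - (m + 1))) (A / (Λ * μ)) ?_ (Or.inr (by positivity))
    (hu.solAt_scale hr0 hr3 hT) ?_ (fun y hy => (hbound y hy).2) ?_ (r⁻¹ • x) ?_
  · simp only [smul_inv_smul₀ hr0.ne'] at key
    rw [inv_mul_le_iff₀ hT] at key
    have h1 : Λ * μ * (k / Λ * 2 ^ (1 - s) + A / (Λ * μ) - δ') =
        k * (μ * 2 ^ (1 - s)) + A - δ' * Λ * μ := by
      field_simp
    rw [h1] at key
    have h2 := mul_le_mul_of_nonneg_left (le_radialFund_two_mul hs1 hr0) hk0.le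
    rw [← hx₀r, ← hμ] at h2
    have h3 : radialFund s ‖x₀‖ ≤ μ := radialFund_anti hr0 (by linarith)
    have h4 := mul_le_mul_of_nonneg_left h3 (mul_pos hδ' hΛ0).le
    have h5 : (k - δ' * Λ / 2) * radialFund s ‖x₀‖ ≤
        max (k - δ' * Λ / 2) (k / 2) * radialFund s ‖x₀‖ :=
      mul_le_mul_of_nonneg_right (le_max_left _ _)
        (radialFund_nonneg hpos (hxR.trans hu.hR1))
    linarith
  · rw [abs_of_nonneg (by positivity)]
    refine hP.scale_le hT.le hΛ0.le hr0 ?_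
    refine mul_le_mul_of_nonneg_left ?_ hΛ0.le
    rw [Real.rpow_neg hr0.le, ← one_div, le_div_iff₀ (by positivity), mul_comm]
    exact hβμ
  · intro y hy y' hy'
    have h1 := hy.1
    rw [sub_zero] at h1
    have h2 : ‖y‖ ^ (1 - s) ≤ 1 := Real.rpow_le_one_of_one_le_of_nonpos h1 (by linarith)
    have h3 : k / Λ * ‖y‖ ^ (1 - s) ≤ k / Λ := mul_le_of_le_one_right (by positivity) h2
    have h4 : A / (Λ * μ) ≤ 1 / Λ := by
      rw [div_le_div_iff₀ hT hΛ0]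
      nlinarith
    have h5 : k / Λ + 1 / Λ = 1 := by rw [← add_div, ← hΛ, div_self hΛ0.ne']
    linarith [(hbound y hy).2, (hbound y' hy').1]
  · refine ⟨r⁻¹ • x₀, ?_, ?_⟩
    · rw [norm_smul, norm_inv, Real.norm_of_nonneg hr0.le, hx₀r]; field_simp
    · simp only [smul_inv_smul₀ hr0.ne']
      have h1 := mul_le_mul_of_nonneg_left (radialFund_mul_le hs1 hr0 one_le_two) hk₁.le
      rw [← hx₀r] at h1
      have h2 : k / Λ * 2 ^ (1 - s) + A / (Λ * μ) - (k - k₁) / Λ * 2 ^ (1 - s) =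
          k₁ / Λ * 2 ^ (1 - s) + A / (Λ * μ) := by ring
      rw [h2]
      have h3 : 0 ≤ A / (Λ * μ) := by positivity
      have h4 : (Λ * μ)⁻¹ * u x₀ ≤ k₁ / Λ * 2 ^ (1 - s) := by
        rw [inv_mul_le_iff₀ hT]
        have h5 : Λ * μ * (k₁ / Λ * 2 ^ (1 - s)) = k₁ * (μ * 2 ^ (1 - s)) := by field_simp
        rw [h5]
        exact hx₀.le.trans h1
      linarith
  · rw [norm_smul, norm_inv, Real.norm_of_nonneg hr0.le, hx, hx₀r]; field_simp

/-- A solution controlled by a multiple of the fundamental solution on arbitrarily small spheres is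
asymptotic to such a multiple. -/
lemma PuncturedSol.tendsto_weak (hN : 2 ≤ N) (hu : PuncturedSol p m R A u)
    (hP : Subcritical N p m s β b)
    (h : ∃ k > 0, ∃ᶠ r in 𝓝[>] (0 : ℝ), ∀ x : Euc N, ‖x‖ = r → u x ≤ k * radialFund s r) :
    ∃ k : ℝ, 0 ≤ k ∧ Tendsto (fun x : Euc N => u x / radialFund s ‖x‖) (𝓝[≠] 0) (𝓝 k) := by
  set S : Set ℝ := {k | 0 < k ∧ ∃ᶠ r in 𝓝[>] (0 : ℝ), ∀ x : Euc N, ‖x‖ = r →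
    u x ≤ k * radialFund s r} with hS
  have hne : S.Nonempty := h
  have hbdd : BddBelow S := ⟨0, fun k hk => hk.1.le⟩
  have hA := hu.hA
  have hnorm : Tendsto (fun x : Euc N => ‖x‖) (𝓝[≠] 0) (𝓝[>] 0) := tendsto_norm_nhdsNE_zero
  have hkle : ∀ k ∈ S, ∀ x : Euc N, 0 < ‖x‖ → ‖x‖ ≤ R → u x ≤ k * radialFund s ‖x‖ + A := by
    rintro k ⟨hk, hf⟩ x hx hxR
    obtain ⟨r, hr, hrx, hr0⟩ := (hf.and_eventually
      ((eventually_nhdsWithin_of_eventually_nhds (eventually_lt_nhds hx)).and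
        self_mem_nhdsWithin)).exists
    refine hu.le_fund hP hk hr0 le_rfl (fun y hy => ?_) (fun y hy => ?_) x hrx.le hxR
    · linarith [hr y hy]
    · have := mul_nonneg hk.le (radialFund_nonneg (s := s) hu.hR hu.hR1)
      linarith [hu.bdry y hy]
  set k := sInf S with hk
  have hk0 : 0 ≤ k := le_csInf hne fun k hk => hk.1.le
  have hle : ∀ x : Euc N, 0 < ‖x‖ → ‖x‖ ≤ R → u x ≤ k * radialFund s ‖x‖ + A := by
    intro x hx hxR
    have h0 := radialFund_nonneg (s := s) hx (hxR.trans hu.hR1)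
    refine le_of_forall_pos_le_add fun ε hε => ?_
    obtain ⟨k', hk', hlt⟩ := exists_lt_of_csInf_lt hne
      (show sInf S < k + ε / (radialFund s ‖x‖ + 1) from lt_add_of_pos_right k (by positivity))
    have h1 := hkle k' hk' x hx hxR
    have h2 := mul_le_mul_of_nonneg_right hlt.le h0
    have h3 : ε / (radialFund s ‖x‖ + 1) * radialFund s ‖x‖ ≤ ε := by
      rw [div_mul_eq_mul_div, div_le_iff₀ (by positivity)]
      nlinarith
    linarith
  have hμpos : ∀ᶠ x : Euc N in 𝓝[≠] 0, 0 < radialFund s ‖x‖ :=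
    hnorm.eventually ((tendsto_radialFund s).eventually_gt_atTop 0)
  refine ⟨k, hk0, tendsto_order.2 ⟨fun a ha => ?_, fun a ha => ?_⟩⟩
  · rcases lt_or_ge a 0 with ha0 | ha0
    · filter_upwards [hu.eventually_small, hμpos] with x hx hμ
      exact ha0.trans_le (div_nonneg (hu.nonneg x hx.1 hx.2) hμ.le)
    · obtain ⟨k₁, hak, hk₁⟩ := exists_between ha
      by_contra hcon
      have hlow : ∃ᶠ x : Euc N in 𝓝[≠] 0, u x < k₁ * radialFund s ‖x‖ := by
        refine ((not_eventually.1 hcon).and_eventually hμpos).mono ?_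
        rintro x ⟨h1, h2⟩
        rw [not_lt, div_le_iff₀ h2] at h1
        exact h1.trans_lt (mul_lt_mul_of_pos_right hak h2)
      obtain ⟨k₂, hk₂, hk₂k, hf⟩ :=
        hu.exists_smaller_multiple hN hP (ha0.trans_lt hak) hk₁ hle hlow
      exact absurd (csInf_le hbdd ⟨hk₂, hf⟩) (not_le.2 hk₂k)
  · have hev : ∀ᶠ x : Euc N in 𝓝[≠] 0, A < (a - k) * radialFund s ‖x‖ :=
      hnorm.eventually (((tendsto_radialFund s).const_mul_atTop
        (sub_pos.2 ha)).eventually_gt_atTop A)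
    filter_upwards [hu.eventually_small, hμpos, hev] with x hx hμ hA'
    rw [div_lt_iff₀ hμ]
    linarith [hle x hx.1 hx.2]

theorem PuncturedSol.classification (hN : 2 ≤ N) (hu : PuncturedSol p m R A u)
    (hP : Subcritical N p m s β b) :
    Xor' (∃ k : ℝ, 0 ≤ k ∧ Tendsto (fun x : Euc N => u x / radialFund s ‖x‖) (𝓝[≠] 0) (𝓝 k))
      (Tendsto (fun x : Euc N => ‖x‖ ^ β * u x) (𝓝[≠] 0) (𝓝 (β⁻¹ * b ^ (1 / m)))) := by
  have hnorm : Tendsto (fun x : Euc N => ‖x‖) (𝓝[≠] 0) (𝓝[>] 0) := tendsto_norm_nhdsNE_zero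
  refine xor_iff_or_and_not_and _ _ |>.2 ⟨?_, ?_⟩
  · by_cases h : ∃ k > 0, ∃ᶠ r in 𝓝[>] (0 : ℝ), ∀ x : Euc N, ‖x‖ = r → u x ≤ k * radialFund s r
    · exact Or.inl (hu.tendsto_weak hN hP h)
    · refine Or.inr (hu.tendsto_strong hP (hu.dominates_of_unbounded hN hP ?_))
      push Not at h
      exact h
  · rintro ⟨⟨k, -, hk⟩, hl⟩
    have h1 : Tendsto (fun x : Euc N => ‖x‖ ^ β * radialFund s ‖x‖) (𝓝[≠] 0) (𝓝 0) :=
      (tendsto_rpow_mul_radialFund hP.beta_pos hP.lt_beta).comp hnorm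
    have h2 := h1.mul hk
    rw [zero_mul] at h2
    have h3 : Tendsto (fun x : Euc N => ‖x‖ ^ β * u x) (𝓝[≠] 0) (𝓝 0) := by
      refine h2.congr' ?_
      filter_upwards [hnorm.eventually ((tendsto_radialFund s).eventually_gt_atTop 0)] with x hx
      field_simp
    have : Nontrivial (Fin N) := Fin.nontrivial_iff_two_le.2 hN
    have h4 := tendsto_nhds_unique hl h3
    have hβ := hP.beta_pos
    have hb := hP.b_pos
    have h5 : 0 < β⁻¹ * b ^ (1 / m) := by positivity
    linarith

end Classification

lemma mup_eq_radialFund {p : ℝ} (hp : 1 < p) (x : Euc N) :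
    mup N p x = radialFund ((N - 1) / (p - 1)) ‖x‖ := by
  have hp0 : 0 < p - 1 := by linarith
  rw [mup, radialFund]
  by_cases h : p < N
  · have h1 : (N : ℝ) - p ≠ 0 := by linarith
    rw [if_pos h, if_pos ((one_lt_div hp0).2 (by linarith)),
      show 1 - ((N : ℝ) - 1) / (p - 1) = (p - N) / (p - 1) by field_simp; ring,
      show ((N : ℝ) - 1) / (p - 1) - 1 = (N - p) / (p - 1) by field_simp; ring]
    field_simp
  · rw [if_neg h, if_neg (by rw [one_lt_div hp0]; linarith)]

lemma subcritical_of_lt (hN : 2 ≤ N) {p q : ℝ} (hp : 1 < p) (hpN : p ≤ N) (hq1 : p - 1 < q)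
    (hq2 : q < (N : ℝ) * (p - 1) / ((N : ℝ) - 1)) :
    Subcritical N p (q + 1 - p) ((N - 1) / (p - 1)) ((p - q) / (q + 1 - p))
      (((N : ℝ) * (p - 1) - ((N : ℝ) - 1) * q) / (q + 1 - p)) := by
  have hp0 : 0 < p - 1 := by linarith
  have hm : 0 < q + 1 - p := by linarith
  have hN1 : (0 : ℝ) < N - 1 := by
    have : (2 : ℝ) ≤ N := by exact_mod_cast hN
    linarith
  rw [lt_div_iff₀ hN1] at hq2
  refine ⟨hp, by field_simp, (one_le_div hp0).2 (by linarith), hm, ?_, by field_simp; ring,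
    by field_simp; ring⟩
  rw [div_mul_eq_mul_div, div_lt_one hp0]
  linarith

lemma IsStrongSolution.exists_puncturedSol {p q : ℝ} {Ω : Set (Euc N)} (hΩ : IsOpen Ω)
    (h0 : (0 : Euc N) ∈ Ω) {u : Euc N → ℝ} (hu : IsStrongSolution p q (Ω \ {0}) u)
    (hpos : ∀ x ∈ Ω \ {0}, 0 ≤ u x) : ∃ R A, PuncturedSol p (q + 1 - p) R A u := by
  obtain ⟨ε, hε, hball⟩ := Metric.isOpen_iff.1 hΩ 0 h0
  have hG : IsOpen (Ω \ {0}) := hΩ.sdiff isClosed_singleton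
  set R := min (ε / 2) 1 with hR
  have hR0 : 0 < R := by positivity
  have hmem : ∀ x : Euc N, 0 < ‖x‖ → ‖x‖ ≤ R → x ∈ Ω \ {0} := fun x hx hxR =>
    ⟨hball (by
      rw [mem_ball_zero_iff]
      linarith [min_le_left (ε / 2) 1]), norm_pos_iff.1 hx⟩
  have hc : ContinuousOn u (sphere (0 : Euc N) R) := fun x hx => by
    rw [mem_sphere_zero_iff_norm] at hx
    exact (hu.solAt hG (hmem x (hx ▸ hR0) hx.le)).1.continuousAt.continuousWithinAt
  obtain ⟨M, hM⟩ := ((isCompact_sphere (0 : Euc N) R).image_of_continuousOn hc).bddAbove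
  refine ⟨R, max M 0, hR0, min_le_right _ _, le_max_right _ _, fun x hx hxR => ?_,
    fun x hx hxR => hpos x (hmem x hx hxR),
    fun x hx => (hM ⟨x, by simpa using hx, rfl⟩).trans (le_max_left _ _)⟩
  rw [show q + 1 - p + 1 = q - p + 2 by ring]
  exact hu.solAt hG (hmem x hx hxR)

end IsolatedSingularities

/-- Full classification of isolated singularities of nonnegative solutions:
exactly one of the two alternatives holds. -/
theorem classification_isolated_singularities (N : ℕ) (hN : 2 ≤ N) (p q : ℝ) (hp1 : 1 < p)
    (hpN : p ≤ N) (hq1 : p - 1 < q) (hq2 : q < (N : ℝ) * (p - 1) / ((N : ℝ) - 1))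
    (Ω : Set (EuclideanSpace ℝ (Fin N))) (hΩ : IsOpen Ω)
    (h0 : (0 : EuclideanSpace ℝ (Fin N)) ∈ Ω)
    (u : EuclideanSpace ℝ (Fin N) → ℝ) (hu : IsStrongSolution p q (Ω \ {0}) u)
    (hpos : ∀ x ∈ Ω \ {0}, 0 ≤ u x) :
    Xor'
      (∃ k : ℝ, 0 ≤ k ∧
        Filter.Tendsto (fun x => u x / mup N p x) (𝓝[≠] (0 : EuclideanSpace ℝ (Fin N)))
          (nhds k))
      (Filter.Tendsto (fun x => ‖x‖ ^ ((p - q) / (q + 1 - p)) * u x)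
        (𝓝[≠] (0 : EuclideanSpace ℝ (Fin N)))
        (nhds (((p - q) / (q + 1 - p))⁻¹
          * (((N : ℝ) * (p - 1) - ((N : ℝ) - 1) * q) / (q + 1 - p)) ^ (1 / (q + 1 - p))))) := by
  obtain ⟨R, A, h⟩ := hu.exists_puncturedSol hΩ h0 hpos
  simp only [mup_eq_radialFund hp1]
  exact h.classification hN (subcritical_of_lt hN hp1 hpN hq1 hq2)
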